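/- arXiv:1912.04335 — 18 statements merged into one kernel-verified Lean document; each statement's English description precedes it below -/
import Mathlib

section
/- Suppose (x̂, π̂) is dual-feasible and φ ≥ ‖π̂‖∞. Then every pair (x, z) feasible for the penalized problem (P_φ) satisfies f(x) + φ·1ᵀz ≥ −(1/2)x̂ᵀHx̂ + bᵀπ̂; in particular, the penalized objective f_φ is bounded below on the feasible set of (P_φ). (Second claim of Lemma 2.0.) -/
open Matrix Filter

/-- The quadratic objective f(x) = (1/2) xᵀHx + cᵀx. -/
noncomputable def qObj {n : ℕ} (H : Matrix (Fin n) (Fin n) ℝ) (c : Fin n → ℝ)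
    (x : Fin n → ℝ) : ℝ :=
  (1 / 2) * (x ⬝ᵥ H.mulVec x) + c ⬝ᵥ x

/-- If (x̂, π̂) is dual-feasible and φ ≥ ‖π̂‖∞, then every (x, z)
feasible for (P_φ) satisfies f(x) + φ·1ᵀz ≥ −(1/2)x̂ᵀHx̂ + bᵀπ̂. -/
theorem penalized_objective_bounded_below
    {n m : ℕ} (H : Matrix (Fin n) (Fin n) ℝ) (hH : H.PosSemidef)
    (c : Fin n → ℝ) (A : Matrix (Fin m) (Fin n) ℝ) (b : Fin m → ℝ)
    (xhat : Fin n → ℝ) (pihat : Fin m → ℝ)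
    (hdeq : H.mulVec xhat + c - Aᵀ.mulVec pihat = 0) (hdpos : 0 ≤ pihat)
    (φ : ℝ) (hφ : ‖pihat‖ ≤ φ) :
    ∀ x : Fin n → ℝ, ∀ z : Fin m → ℝ, b ≤ A.mulVec x + z → 0 ≤ z →
      (-(1 / 2) * (xhat ⬝ᵥ H.mulVec xhat) + b ⬝ᵥ pihat) ≤
        qObj H c x + φ * (∑ i, z i) := by
  intro x z hxz hz
  have hc : c = Aᵀ.mulVec pihat - H.mulVec xhat := by
    have := hdeq
    funext i
    have h := congrFun this i
    simp only [Pi.add_apply, Pi.sub_apply, Pi.zero_apply] at h ⊢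
    linarith
  have hT : Hᵀ = H := by
    have := hH.isHermitian
    simpa [Matrix.IsHermitian, Matrix.conjTranspose_eq_transpose_of_trivial] using this
  have hq : 0 ≤ (x - xhat) ⬝ᵥ H.mulVec (x - xhat) := by
    simpa using hH.dotProduct_mulVec_nonneg (x - xhat)
  have hsym : xhat ⬝ᵥ H.mulVec x = x ⬝ᵥ H.mulVec xhat := by
    rw [Matrix.dotProduct_mulVec, ← Matrix.mulVec_transpose, hT, dotProduct_comm]
  have hA : Aᵀ.mulVec pihat ⬝ᵥ x = A.mulVec x ⬝ᵥ pihat := by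
    rw [Matrix.mulVec_transpose, ← Matrix.dotProduct_mulVec, dotProduct_comm]
  have hcx : c ⬝ᵥ x = A.mulVec x ⬝ᵥ pihat - x ⬝ᵥ H.mulVec xhat := by
    rw [hc, sub_dotProduct, hA, dotProduct_comm (H.mulVec xhat)]
  have hexp : (x - xhat) ⬝ᵥ H.mulVec (x - xhat)
      = x ⬝ᵥ H.mulVec x - 2 * (x ⬝ᵥ H.mulVec xhat) + xhat ⬝ᵥ H.mulVec xhat := by
    rw [Matrix.mulVec_sub, sub_dotProduct, dotProduct_sub, dotProduct_sub, hsym]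
    ring
  have hb : b ⬝ᵥ pihat ≤ A.mulVec x ⬝ᵥ pihat + φ * ∑ i, z i := by
    simp only [dotProduct]
    rw [Finset.mul_sum, ← Finset.sum_add_distrib]
    apply Finset.sum_le_sum
    intro i _
    have h1 : b i ≤ A.mulVec x i + z i := hxz i
    have h2 : 0 ≤ pihat i := hdpos i
    have h3 : 0 ≤ z i := hz i
    have h4 : pihat i ≤ φ := (le_abs_self _).trans ((norm_le_pi_norm pihat i).trans hφ)
    nlinarith [mul_le_mul_of_nonneg_right h1 h2, mul_le_mul_of_nonneg_right h4 h3]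
  unfold qObj
  rw [hcx]
  linarith
end

section
/- Assume the set of optimal solutions of (P) — points x with Ax ≥ b that minimize f over {x : Ax ≥ b} — is nonempty and bounded. Then for every φ > 0, every ρ > 0, and every α ∈ ℝ, the set {(x, z) ∈ ℝ^n × ℝ^m : z ≥ 0, Ax + z ≥ b, f(x) + φ·1ᵀz ≤ α, ‖z‖∞ ≤ ρ} is bounded. (Third claim of Lemma 2.0.) -/
open Matrix Filter

/-- If the optimal solution set of (P) is nonempty and bounded, then
for every φ > 0, ρ > 0, α ∈ ℝ the set
{(x,z) : z ≥ 0, Ax + z ≥ b, f(x) + φ·1ᵀz ≤ α, ‖z‖∞ ≤ ρ} is bounded. -/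
theorem level_sets_with_bounded_relaxation_are_bounded
    {n m : ℕ} (H : Matrix (Fin n) (Fin n) ℝ) (hH : H.PosSemidef)
    (c : Fin n → ℝ) (A : Matrix (Fin m) (Fin n) ℝ) (b : Fin m → ℝ)
    (hne : {x : Fin n → ℝ | b ≤ A.mulVec x ∧
      ∀ x' : Fin n → ℝ, b ≤ A.mulVec x' → qObj H c x ≤ qObj H c x'}.Nonempty)
    (hbd : Bornology.IsBounded {x : Fin n → ℝ | b ≤ A.mulVec x ∧
      ∀ x' : Fin n → ℝ, b ≤ A.mulVec x' → qObj H c x ≤ qObj H c x'})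
    (φ : ℝ) (hφ : 0 < φ) (ρ : ℝ) (hρ : 0 < ρ) (α : ℝ) :
    Bornology.IsBounded {q : (Fin n → ℝ) × (Fin m → ℝ) |
      0 ≤ q.2 ∧ b ≤ A.mulVec q.1 + q.2 ∧
      qObj H c q.1 + φ * (∑ i, q.2 i) ≤ α ∧ ‖q.2‖ ≤ ρ} := by
  obtain ⟨xs, hxs, hopt⟩ := hne
  have key : Bornology.IsBounded {x : Fin n → ℝ | (∀ i, b i - ρ ≤ A.mulVec x i) ∧
      qObj H c x ≤ α} := by
    by_contra hnb
    have hex : ∀ k : ℕ, ∃ x : Fin n → ℝ, ((∀ i, b i - ρ ≤ A.mulVec x i) ∧ qObj H c x ≤ α) ∧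
        (k : ℝ) + 1 < ‖x‖ := by
      intro k
      by_contra hcon
      push Not at hcon
      exact hnb (isBounded_iff_forall_norm_le.2 ⟨(k : ℝ) + 1, fun x hx => hcon x hx⟩)
    choose x hx hxk using hex
    have hpos : ∀ k, 0 < ‖x k‖ := fun k => by
      have := hxk k
      have h2 : (0 : ℝ) ≤ k := Nat.cast_nonneg k
      linarith
    have hr : Tendsto (fun k => ‖x k‖⁻¹) atTop (nhds 0) := by
      apply Tendsto.inv_tendsto_atTop
      refine tendsto_atTop_mono (fun k => ?_) (tendsto_natCast_atTop_atTop (R := ℝ))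
      linarith [hxk k]
    have hsph : ∀ k, ‖x k‖⁻¹ • x k ∈ Metric.sphere (0 : Fin n → ℝ) 1 := by
      intro k
      rw [mem_sphere_zero_iff_norm, norm_smul, norm_inv, norm_norm, inv_mul_cancel₀ (hpos k).ne']
    obtain ⟨d, hd, σ, hσ, hlim⟩ := (isCompact_sphere (0 : Fin n → ℝ) 1).tendsto_subseq hsph
    have hlim2 : Tendsto (fun k => (‖x (σ k)‖⁻¹ • x (σ k), ‖x (σ k)‖⁻¹)) atTop
        (nhds (d, (0 : ℝ))) :=
      hlim.prodMk_nhds (hr.comp hσ.tendsto_atTop)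
    have hxHx : ∀ y : Fin n → ℝ, 0 ≤ y ⬝ᵥ H.mulVec y := fun y => by
      simpa using hH.dotProduct_mulVec_nonneg y
    have hA : ∀ i, 0 ≤ A.mulVec d i := by
      intro i
      have hcl : IsClosed {p : (Fin n → ℝ) × ℝ | p.2 * (b i - ρ) ≤ A.mulVec p.1 i} :=
        isClosed_le (by fun_prop) (by unfold Matrix.mulVec dotProduct; fun_prop)
      have := hcl.mem_of_tendsto hlim2 (Eventually.of_forall fun k => by
        simp only [Set.mem_setOf_eq, Matrix.mulVec_smul, Pi.smul_apply, smul_eq_mul]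
        exact mul_le_mul_of_nonneg_left ((hx _).1 i) (inv_nonneg.2 (norm_nonneg _)))
      simpa using this
    have hc : c ⬝ᵥ d ≤ 0 := by
      have hcl : IsClosed {p : (Fin n → ℝ) × ℝ | c ⬝ᵥ p.1 ≤ p.2 * α} :=
        isClosed_le (by unfold dotProduct; fun_prop) (by fun_prop)
      have := hcl.mem_of_tendsto hlim2 (Eventually.of_forall fun k => by
        simp only [Set.mem_setOf_eq, dotProduct_smul, smul_eq_mul]
        refine mul_le_mul_of_nonneg_left ?_ (inv_nonneg.2 (norm_nonneg _))
        have h1 := (hx (σ k)).2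
        have h2 := hxHx (x (σ k))
        unfold qObj at h1
        linarith)
      simpa using this
    have hq : d ⬝ᵥ H.mulVec d ≤ 0 := by
      have hcl : IsClosed {p : (Fin n → ℝ) × ℝ |
          (1 / 2) * (p.1 ⬝ᵥ H.mulVec p.1) + p.2 * (c ⬝ᵥ p.1) ≤ p.2 ^ 2 * α} :=
        isClosed_le (by unfold Matrix.mulVec dotProduct; fun_prop) (by fun_prop)
      have := hcl.mem_of_tendsto hlim2 (Eventually.of_forall fun k => by
        simp only [Set.mem_setOf_eq, dotProduct_smul, smul_dotProduct, Matrix.mulVec_smul,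
          smul_eq_mul]
        have h1 := mul_le_mul_of_nonneg_left (hx (σ k)).2 (sq_nonneg (‖x (σ k)‖⁻¹))
        unfold qObj at h1
        linarith)
      simp only [Set.mem_setOf_eq] at this
      linarith
    have hHd : H.mulVec d = 0 := by
      apply (hH.dotProduct_mulVec_zero_iff d).1
      simpa using le_antisymm hq (hxHx d)
    have hdH : ∀ y : Fin n → ℝ, d ⬝ᵥ H.mulVec y = 0 := by
      intro y
      have hT : Hᵀ = H := by simpa using hH.isHermitian.eq
      rw [Matrix.dotProduct_mulVec, ← Matrix.mulVec_transpose, hT, hHd, zero_dotProduct]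
    obtain ⟨C, hC⟩ := isBounded_iff_forall_norm_le.1 hbd
    have hray : ∀ t : ℝ, 0 ≤ t → ‖xs + t • d‖ ≤ C := by
      intro t ht
      apply hC
      refine ⟨fun i => ?_, fun x' hx' => le_trans ?_ (hopt x' hx')⟩
      · have h1 := hxs i
        have h2 := mul_nonneg ht (hA i)
        simp only [Matrix.mulVec_add, Matrix.mulVec_smul, Pi.add_apply, Pi.smul_apply, smul_eq_mul]
        linarith
      · have h2 := mul_nonneg ht (neg_nonneg.2 hc)
        simp only [qObj, Matrix.mulVec_add, Matrix.mulVec_smul, hHd, add_dotProduct,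
          smul_dotProduct, hdH, dotProduct_add, dotProduct_smul, smul_eq_mul, smul_zero,
          dotProduct_zero]
        linarith
    have hd1 : ‖d‖ = 1 := mem_sphere_zero_iff_norm.1 hd
    have hC0 : 0 ≤ C := (norm_nonneg _).trans (hray 0 le_rfl)
    have ht : 0 ≤ C + ‖xs‖ + 1 := by positivity
    have h1 := hray _ ht
    have h2 : ‖(C + ‖xs‖ + 1) • d‖ = C + ‖xs‖ + 1 := by
      rw [norm_smul, hd1, mul_one, Real.norm_of_nonneg ht]
    have h3 := norm_sub_le (xs + (C + ‖xs‖ + 1) • d) xs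
    rw [add_sub_cancel_left, h2] at h3
    linarith
  refine (key.prod (Metric.isBounded_closedBall (x := (0 : Fin m → ℝ)) (r := ρ))).subset ?_
  rintro ⟨x, z⟩ ⟨hz, hb, hf, hzρ⟩
  refine ⟨⟨fun i => ?_, ?_⟩, mem_closedBall_zero_iff.2 hzρ⟩
  · have h1 := hb i
    have h2 := (le_abs_self _).trans ((norm_le_pi_norm z i).trans hzρ)
    simp only [Pi.add_apply] at h1
    dsimp only at h1 h2 ⊢
    linarith
  · have h1 : 0 ≤ ∑ i, z i := Finset.sum_nonneg fun i _ => hz i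
    have h2 := mul_nonneg hφ.le h1
    dsimp only at hf ⊢
    linarith
end

section
/- Let φ > 0 and suppose (x*, z*, π*, ξ*) ∈ ℝ^n × ℝ^m × ℝ^m × ℝ^m satisfies the optimality conditions of the penalized primal–dual pair: Hx* + c − Aᵀπ* = 0, π* + ξ* = φ·1, s*ᵢπ*ᵢ = 0 and z*ᵢξ*ᵢ = 0 for all i, and s* ≥ 0, z* ≥ 0, π* ≥ 0, ξ* ≥ 0, where s* := Ax* + z* − b. If φ > ‖π*‖∞, then z* = 0; moreover Ax* ≥ b, π* ≥ 0, Hx* + c − Aᵀπ* = 0, π*ᵢ(Ax* − b)ᵢ = 0 for all i, and x* is an optimal solution of (P). (Lemma 2.1: exactness of the ℓ1 penalty.) -/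
open Matrix Filter

/-- Lemma 2.1, exactness of the ℓ1 penalty. -/
theorem exact_penalty
    {n m : ℕ} (H : Matrix (Fin n) (Fin n) ℝ) (hH : H.PosSemidef)
    (c : Fin n → ℝ) (A : Matrix (Fin m) (Fin n) ℝ) (b : Fin m → ℝ)
    (φ : ℝ) (hφ : 0 < φ)
    (xstar : Fin n → ℝ) (zstar pistar xistar : Fin m → ℝ)
    (hstat : H.mulVec xstar + c - Aᵀ.mulVec pistar = 0)
    (hsum : pistar + xistar = fun _ => φ)
    (hcomp1 : ∀ i, (A.mulVec xstar + zstar - b) i * pistar i = 0)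
    (hcomp2 : ∀ i, zstar i * xistar i = 0)
    (hs : 0 ≤ A.mulVec xstar + zstar - b) (hz : 0 ≤ zstar)
    (hpi : 0 ≤ pistar) (hxi : 0 ≤ xistar)
    (hbig : ‖pistar‖ < φ) :
    zstar = 0 ∧ b ≤ A.mulVec xstar ∧ 0 ≤ pistar ∧
      H.mulVec xstar + c - Aᵀ.mulVec pistar = 0 ∧
      (∀ i, pistar i * (A.mulVec xstar - b) i = 0) ∧
      (∀ x : Fin n → ℝ, b ≤ A.mulVec x → qObj H c xstar ≤ qObj H c x) := by
  have hz0 : zstar = 0 := by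
    funext i
    have h1 : pistar i < φ :=
      lt_of_le_of_lt ((le_abs_self _).trans (norm_le_pi_norm pistar i)) hbig
    have h2 : pistar i + xistar i = φ := congrFun hsum i
    rcases mul_eq_zero.mp (hcomp2 i) with h | h
    · exact h
    · linarith
  subst hz0
  simp only [add_zero] at hs hcomp1
  refine ⟨rfl, sub_nonneg.mp hs, hpi, hstat, fun i => by rw [mul_comm]; exact hcomp1 i, ?_⟩
  intro x hx
  have hT : Hᵀ = H := by
    have h := hH.isHermitian.eq
    rwa [Matrix.conjTranspose_eq_transpose_of_trivial] at h
  have hpsd : 0 ≤ (x - xstar) ⬝ᵥ H.mulVec (x - xstar) := by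
    simpa using hH.dotProduct_mulVec_nonneg (x - xstar)
  have hsym : xstar ⬝ᵥ H.mulVec x = x ⬝ᵥ H.mulVec xstar := by
    rw [Matrix.dotProduct_mulVec, ← Matrix.mulVec_transpose, hT, dotProduct_comm]
  have hc : c = Aᵀ.mulVec pistar - H.mulVec xstar := by
    have := sub_eq_zero.mp hstat
    rw [← this]; abel
  have hA : ∀ y : Fin n → ℝ, Aᵀ.mulVec pistar ⬝ᵥ y = pistar ⬝ᵥ A.mulVec y := by
    intro y
    rw [Matrix.mulVec_transpose, Matrix.dotProduct_mulVec]
  have h0 : pistar ⬝ᵥ (A.mulVec xstar - b) = 0 := by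
    unfold dotProduct
    exact Finset.sum_eq_zero fun i _ => by rw [mul_comm]; exact hcomp1 i
  have h1 : 0 ≤ pistar ⬝ᵥ (A.mulVec x - b) := by
    unfold dotProduct
    exact Finset.sum_nonneg fun i _ => mul_nonneg (hpi i) (sub_nonneg.mpr (hx i))
  have hcx : ∀ y : Fin n → ℝ, c ⬝ᵥ y = pistar ⬝ᵥ A.mulVec y - y ⬝ᵥ H.mulVec xstar := by
    intro y
    rw [hc, sub_dotProduct, hA, dotProduct_comm (H.mulVec xstar)]
  unfold qObj
  rw [hcx x, hcx xstar]
  rw [Matrix.mulVec_sub, dotProduct_sub, sub_dotProduct, sub_dotProduct] at hpsd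
  rw [dotProduct_sub] at h0 h1
  linarith
end

section
/- If (x̂, π̂) is dual-feasible and (x, z) ∈ ℝ^n × ℝ^m satisfies Ax + z ≥ b and z ≥ 0, then −π̂ᵀz ≤ f(x) − ψ(x̂, π̂). (Inequality (2.6), a relaxed weak-duality inequality.) -/
open Matrix Filter

/-- The dual objective ψ(x̂, π̂) = −(1/2)x̂ᵀHx̂ + bᵀπ̂. -/
noncomputable def dObj {n m : ℕ} (H : Matrix (Fin n) (Fin n) ℝ) (b : Fin m → ℝ)
    (xhat : Fin n → ℝ) (pihat : Fin m → ℝ) : ℝ :=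
  -(1 / 2) * (xhat ⬝ᵥ H.mulVec xhat) + b ⬝ᵥ pihat

/-- inequality (2.6), a relaxed weak-duality inequality. -/
theorem relaxed_weak_duality
    {n m : ℕ} (H : Matrix (Fin n) (Fin n) ℝ) (hH : H.PosSemidef)
    (c : Fin n → ℝ) (A : Matrix (Fin m) (Fin n) ℝ) (b : Fin m → ℝ)
    (xhat : Fin n → ℝ) (pihat : Fin m → ℝ)
    (hdeq : H.mulVec xhat + c - Aᵀ.mulVec pihat = 0) (hdpos : 0 ≤ pihat)
    (x : Fin n → ℝ) (z : Fin m → ℝ)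
    (hfeas : b ≤ A.mulVec x + z) (hz : 0 ≤ z) :
    -(pihat ⬝ᵥ z) ≤ qObj H c x - dObj H b xhat pihat := by
  have hsymm : xhat ⬝ᵥ H.mulVec x = x ⬝ᵥ H.mulVec xhat := by
    have hT : Hᵀ = H := by
      have h := hH.isHermitian.eq
      rwa [Matrix.conjTranspose_eq_transpose_of_trivial] at h
    rw [Matrix.dotProduct_mulVec, ← Matrix.mulVec_transpose, hT, dotProduct_comm]
  have hq : 0 ≤ (x - xhat) ⬝ᵥ H.mulVec (x - xhat) := by
    have h := hH.dotProduct_mulVec_nonneg (x - xhat)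
    rwa [star_trivial] at h
  rw [Matrix.mulVec_sub, dotProduct_sub, sub_dotProduct, sub_dotProduct, hsymm] at hq
  have hd : x ⬝ᵥ H.mulVec xhat + c ⬝ᵥ x = pihat ⬝ᵥ A.mulVec x := by
    have h := congrArg (fun v => x ⬝ᵥ v) (sub_eq_zero.mp hdeq)
    simp only [dotProduct_add] at h
    rw [dotProduct_comm c x, h, Matrix.mulVec_transpose, dotProduct_comm,
      ← Matrix.dotProduct_mulVec]
  have hb : pihat ⬝ᵥ b ≤ pihat ⬝ᵥ (A.mulVec x + z) :=
    dotProduct_le_dotProduct_of_nonneg_left hfeas hdpos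
  rw [dotProduct_add] at hb
  unfold qObj dObj
  rw [dotProduct_comm b pihat]
  linarith
end

section
/- Let (x̂, π̂) be dual-feasible, let (x, z) ∈ ℝ^n × ℝ^m satisfy Ax + z ≥ b and z ≥ 0, and let φ > ‖π̂‖∞. Then ‖z‖∞ ≤ (f(x) + φ·1ᵀz − ψ(x̂, π̂)) / (φ − ‖π̂‖∞). (Lemma 3.2.) -/
open Matrix Filter

/-- Lemma 3.2: bound on ‖z‖∞ for (P_φ)-feasible (x, z) when
φ > ‖π̂‖∞. -/
theorem relaxation_bound
    {n m : ℕ} (H : Matrix (Fin n) (Fin n) ℝ) (hH : H.PosSemidef)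
    (c : Fin n → ℝ) (A : Matrix (Fin m) (Fin n) ℝ) (b : Fin m → ℝ)
    (xhat : Fin n → ℝ) (pihat : Fin m → ℝ)
    (hdeq : H.mulVec xhat + c - Aᵀ.mulVec pihat = 0) (hdpos : 0 ≤ pihat)
    (x : Fin n → ℝ) (z : Fin m → ℝ)
    (hfeas : b ≤ A.mulVec x + z) (hz : 0 ≤ z)
    (φ : ℝ) (hφ : ‖pihat‖ < φ) :
    ‖z‖ ≤ (qObj H c x + φ * (∑ i, z i) - dObj H b xhat pihat) / (φ - ‖pihat‖) := by
  have hpos : 0 < φ - ‖pihat‖ := sub_pos.mpr hφ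
  have hznorm : ‖z‖ ≤ ∑ i, z i := by
    refine (pi_norm_le_iff_of_nonneg (Finset.sum_nonneg fun i _ => hz i)).2 fun i => ?_
    rw [Real.norm_eq_abs, abs_of_nonneg (hz i)]
    exact Finset.single_le_sum (fun j _ => hz j) (Finset.mem_univ i)
  have hpz : pihat ⬝ᵥ z ≤ ‖pihat‖ * ∑ i, z i := by
    rw [Finset.mul_sum]
    refine Finset.sum_le_sum fun i _ => mul_le_mul_of_nonneg_right ?_ (hz i)
    exact (le_abs_self _).trans (norm_le_pi_norm pihat i)
  have hfe : pihat ⬝ᵥ b ≤ pihat ⬝ᵥ (A.mulVec x) + pihat ⬝ᵥ z := by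
    rw [← dotProduct_add]
    exact Finset.sum_le_sum fun i _ => mul_le_mul_of_nonneg_left (hfeas i) (hdpos i)
  have hc : (H.mulVec xhat) ⬝ᵥ x + c ⬝ᵥ x - pihat ⬝ᵥ (A.mulVec x) = 0 := by
    have h := congrArg (fun v => v ⬝ᵥ x) hdeq
    simp only [sub_dotProduct, add_dotProduct, zero_dotProduct] at h
    rw [mulVec_transpose, ← dotProduct_mulVec] at h
    exact h
  have hsq : 0 ≤ (x - xhat) ⬝ᵥ H.mulVec (x - xhat) := by
    simpa using hH.dotProduct_mulVec_nonneg (x - xhat)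
  have hsymm : Hᵀ = H := by
    have := hH.isHermitian.eq
    rwa [conjTranspose_eq_transpose_of_trivial] at this
  have hs : xhat ⬝ᵥ H.mulVec x = (H.mulVec xhat) ⬝ᵥ x := by
    rw [dotProduct_mulVec, ← mulVec_transpose, hsymm]
  have hs2 : x ⬝ᵥ H.mulVec xhat = (H.mulVec xhat) ⬝ᵥ x := dotProduct_comm _ _
  simp only [mulVec_sub, dotProduct_sub, sub_dotProduct, hs, hs2] at hsq
  rw [le_div_iff₀ hpos]
  have h1 := mul_le_mul_of_nonneg_right hznorm hpos.le
  have hb : b ⬝ᵥ pihat = pihat ⬝ᵥ b := dotProduct_comm _ _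
  unfold qObj dObj
  rw [hb]
  nlinarith
end

section
/- Let (x̂, π̂) be dual-feasible and let (x, z) ∈ ℝ^n × ℝ^m satisfy Ax + z ≥ b and z ≥ 0. Then f(x) + ‖π̂‖∞·1ᵀz − ψ(x̂, π̂) ≥ 0; consequently the function g(φ) := (f(x) + φ·1ᵀz − ψ(x̂, π̂)) / (φ − ‖π̂‖∞) is nonincreasing on the interval (‖π̂‖∞, ∞). (Key step in the proof of Lemma 3.3.) -/
open Matrix Filter

/-- key step in the proof of Lemma 3.3:
f(x) + ‖π̂‖∞·1ᵀz − ψ(x̂,π̂) ≥ 0, and consequently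
g(φ) = (f(x) + φ·1ᵀz − ψ(x̂,π̂))/(φ − ‖π̂‖∞) is nonincreasing on (‖π̂‖∞, ∞). -/
theorem g_nonincreasing
    {n m : ℕ} (H : Matrix (Fin n) (Fin n) ℝ) (hH : H.PosSemidef)
    (c : Fin n → ℝ) (A : Matrix (Fin m) (Fin n) ℝ) (b : Fin m → ℝ)
    (xhat : Fin n → ℝ) (pihat : Fin m → ℝ)
    (hdeq : H.mulVec xhat + c - Aᵀ.mulVec pihat = 0) (hdpos : 0 ≤ pihat)
    (x : Fin n → ℝ) (z : Fin m → ℝ)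
    (hfeas : b ≤ A.mulVec x + z) (hz : 0 ≤ z) :
    0 ≤ qObj H c x + ‖pihat‖ * (∑ i, z i) - dObj H b xhat pihat ∧
    ∀ φ₁ φ₂ : ℝ, ‖pihat‖ < φ₁ → φ₁ ≤ φ₂ →
      (qObj H c x + φ₂ * (∑ i, z i) - dObj H b xhat pihat) / (φ₂ - ‖pihat‖) ≤
      (qObj H c x + φ₁ * (∑ i, z i) - dObj H b xhat pihat) / (φ₁ - ‖pihat‖) := by
  have key : 0 ≤ qObj H c x + ‖pihat‖ * (∑ i, z i) - dObj H b xhat pihat := by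
    have h1 : 0 ≤ (x - xhat) ⬝ᵥ H.mulVec (x - xhat) := by
      simpa using hH.dotProduct_mulVec_nonneg (x - xhat)
    have hsym : xhat ⬝ᵥ H.mulVec x = x ⬝ᵥ H.mulVec xhat := by
      have hT : Hᵀ = H := by
        simpa [Matrix.conjTranspose_eq_transpose_of_trivial] using hH.isHermitian.eq
      rw [Matrix.dotProduct_mulVec, ← Matrix.mulVec_transpose, hT, dotProduct_comm]
    have h2 : x ⬝ᵥ H.mulVec xhat + c ⬝ᵥ x = pihat ⬝ᵥ A.mulVec x := by
      have h := sub_eq_zero.mp hdeq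
      rw [dotProduct_comm c x, ← dotProduct_add, h, Matrix.mulVec_transpose,
        dotProduct_comm, ← Matrix.dotProduct_mulVec]
    have h3 : b ⬝ᵥ pihat ≤ pihat ⬝ᵥ A.mulVec x + pihat ⬝ᵥ z := by
      rw [← dotProduct_add, dotProduct_comm]
      exact dotProduct_le_dotProduct_of_nonneg_left hfeas hdpos
    have h4 : pihat ⬝ᵥ z ≤ ‖pihat‖ * ∑ i, z i := by
      rw [Finset.mul_sum]
      refine Finset.sum_le_sum fun i _ => ?_
      exact mul_le_mul_of_nonneg_right ((Real.le_norm_self _).trans (norm_le_pi_norm pihat i)) (hz i)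
    rw [Matrix.mulVec_sub, sub_dotProduct, dotProduct_sub, dotProduct_sub, hsym] at h1
    unfold qObj dObj
    linarith
  refine ⟨key, fun φ₁ φ₂ h1 h2 => ?_⟩
  rw [div_le_div_iff₀ (by linarith) (by linarith)]
  nlinarith [mul_nonneg key (sub_nonneg.mpr h2)]
end

section
/- Suppose there exists a dual-feasible pair (x̂, π̂). Let sequences (x^k)_{k≥0} ⊂ ℝ^n, (z^k)_{k≥0} ⊂ ℝ^m and a positive nondecreasing scalar sequence (φ_k)_{k≥0} satisfy: z^k ≥ 0 and Ax^k + z^k ≥ b for all k; f(x^k) + φ_k·1ᵀz^k ≤ f(x^{k−1}) + φ_k·1ᵀz^{k−1} for all k ≥ 1; and, if the sequence (z^k) is unbounded, then φ_k → ∞. Then the sequence (z^k) is bounded. (Lemma 3.3.) -/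
open Matrix Filter

theorem qObj_lower {n m : ℕ} (H : Matrix (Fin n) (Fin n) ℝ) (hH : H.PosSemidef)
    (c : Fin n → ℝ) (A : Matrix (Fin m) (Fin n) ℝ) (b : Fin m → ℝ)
    (xhat : Fin n → ℝ) (pihat : Fin m → ℝ)
    (hdeq : H.mulVec xhat + c - Aᵀ.mulVec pihat = 0) (hdpos : 0 ≤ pihat)
    (x : Fin n → ℝ) (z : Fin m → ℝ) (hz : 0 ≤ z) (hfeas : b ≤ A.mulVec x + z) :
    pihat ⬝ᵥ b - (1 / 2) * (xhat ⬝ᵥ H.mulVec xhat) ≤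
      qObj H c x + (∑ i, pihat i) * (∑ i, z i) := by
  have h1 : 0 ≤ (x - xhat) ⬝ᵥ H.mulVec (x - xhat) := by
    simpa using hH.dotProduct_mulVec_nonneg (x - xhat)
  have hsym : xhat ⬝ᵥ H.mulVec x = x ⬝ᵥ H.mulVec xhat := by
    have hT : Hᵀ = H := by simpa [Matrix.IsHermitian] using hH.1
    rw [Matrix.dotProduct_mulVec, ← Matrix.mulVec_transpose, hT, dotProduct_comm]
  rw [Matrix.mulVec_sub, sub_dotProduct, dotProduct_sub, dotProduct_sub, hsym] at h1
  have hc : c = Aᵀ.mulVec pihat - H.mulVec xhat := by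
    have := sub_eq_zero.mp hdeq
    rw [← this]; simp
  have h2 : c ⬝ᵥ x = pihat ⬝ᵥ A.mulVec x - x ⬝ᵥ H.mulVec xhat := by
    rw [hc, sub_dotProduct, dotProduct_comm (H.mulVec xhat), Matrix.mulVec_transpose,
      Matrix.dotProduct_mulVec pihat]
  have h3 : pihat ⬝ᵥ b ≤ pihat ⬝ᵥ (A.mulVec x + z) :=
    Finset.sum_le_sum fun i _ => mul_le_mul_of_nonneg_left (hfeas i) (hdpos i)
  rw [dotProduct_add] at h3
  have h4 : pihat ⬝ᵥ z ≤ (∑ i, pihat i) * (∑ i, z i) := by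
    rw [Finset.mul_sum]
    refine Finset.sum_le_sum fun i _ => mul_le_mul_of_nonneg_right ?_ (hz i)
    exact Finset.single_le_sum (f := pihat) (fun j _ => hdpos j) (Finset.mem_univ i)
  unfold qObj
  linarith

/-- Lemma 3.3: the sequence (z^k) is bounded. -/
theorem relaxation_sequence_bounded
    {n m : ℕ} (H : Matrix (Fin n) (Fin n) ℝ) (hH : H.PosSemidef)
    (c : Fin n → ℝ) (A : Matrix (Fin m) (Fin n) ℝ) (b : Fin m → ℝ)
    (xhat : Fin n → ℝ) (pihat : Fin m → ℝ)
    (hdeq : H.mulVec xhat + c - Aᵀ.mulVec pihat = 0) (hdpos : 0 ≤ pihat)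
    (x : ℕ → Fin n → ℝ) (z : ℕ → Fin m → ℝ) (φ : ℕ → ℝ)
    (hφpos : ∀ k, 0 < φ k) (hφmono : Monotone φ)
    (hzpos : ∀ k, 0 ≤ z k) (hfeas : ∀ k, b ≤ A.mulVec (x k) + z k)
    (hdesc : ∀ k : ℕ,
      qObj H c (x (k + 1)) + φ (k + 1) * (∑ i, z (k + 1) i) ≤
      qObj H c (x k) + φ (k + 1) * (∑ i, z k i))
    (hunb : (¬ ∃ M : ℝ, ∀ k, ‖z k‖ ≤ M) → Tendsto φ atTop atTop) :
    ∃ M : ℝ, ∀ k, ‖z k‖ ≤ M := by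
  by_contra hcon
  have hlim := hunb hcon
  apply hcon
  set P := ∑ i, pihat i with hP
  set C := pihat ⬝ᵥ b - (1 / 2) * (xhat ⬝ᵥ H.mulVec xhat) with hC
  have hlow : ∀ k, C ≤ qObj H c (x k) + P * (∑ i, z k i) := fun k =>
    qObj_lower H hH c A b xhat pihat hdeq hdpos (x k) (z k) (hzpos k) (hfeas k)
  have hS0 : ∀ k, 0 ≤ ∑ i, z k i := fun k => Finset.sum_nonneg fun i _ => hzpos k i
  have hnorm : ∀ k, ‖z k‖ ≤ ∑ i, z k i := fun k => by
    rw [pi_norm_le_iff_of_nonneg (hS0 k)]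
    intro i
    rw [Real.norm_of_nonneg (hzpos k i)]
    exact Finset.single_le_sum (f := z k) (fun j _ => hzpos k j) (Finset.mem_univ i)
  obtain ⟨K, hK⟩ := (hlim.eventually_ge_atTop (P + 1)).exists
  have hψ : ∀ k, K ≤ k → 0 < φ k - P := fun k hk => by
    have := hφmono hk
    linarith
  generalize hS : (fun k => ∑ i, z k i) = S at *
  generalize hg : (fun k => qObj H c (x k) + P * (∑ i, z k i) - C) = g at *
  have hS' : ∀ k, ∑ i, z k i = S k := fun k => congrFun hS k
  have hg' : ∀ k, qObj H c (x k) = g k - P * S k + C := fun k => by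
    rw [← hg, ← hS]; ring
  simp only [hS', hg'] at hdesc hlow hS0 hnorm
  have hg0 : ∀ k, 0 ≤ g k := fun k => by linarith [hlow k]
  have hV : ∀ k, K ≤ k → g k / (φ k - P) + S k ≤ g K / (φ K - P) + S K := by
    intro k hk
    induction k, hk using Nat.le_induction with
    | base => exact le_rfl
    | succ k hk ih =>
      refine le_trans ?_ ih
      have p1 := hψ k hk
      have p2 := hψ (k + 1) (by omega)
      have h1 : g k / (φ (k + 1) - P) ≤ g k / (φ k - P) :=
        div_le_div_of_nonneg_left (hg0 k) p1 (by linarith [hφmono (Nat.le_succ k)])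
      have h2 : g (k + 1) / (φ (k + 1) - P) + S (k + 1) ≤ g k / (φ (k + 1) - P) + S k := by
        rw [div_add' _ _ _ p2.ne', div_add' _ _ _ p2.ne']
        apply div_le_div_of_nonneg_right _ p2.le
        linarith [hdesc k]
      linarith
  refine ⟨g K / (φ K - P) + S K + ∑ j ∈ Finset.range K, S j, fun k => ?_⟩
  have hsum : 0 ≤ ∑ j ∈ Finset.range K, S j := Finset.sum_nonneg fun j _ => hS0 j
  have hVK : 0 ≤ g K / (φ K - P) := div_nonneg (hg0 K) (hψ K le_rfl).le
  rcases le_or_gt K k with hk | hk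
  · have := div_nonneg (hg0 k) (hψ k hk).le
    linarith [hV k hk, hnorm k]
  · have := Finset.single_le_sum (f := S) (fun j _ => hS0 j) (Finset.mem_range.mpr hk)
    linarith [hnorm k, hS0 K]
end

section
/- Assume: (a) the only x ∈ ℝ^n with Hx = 0 and Ax = 0 is x = 0; and (b) there exist x̂ ∈ ℝ^n and π̂ ∈ ℝ^m with Ax̂ ≥ b, Hx̂ + c = Aᵀπ̂, and π̂ > 0 componentwise. Let sequences (x^k) ⊂ ℝ^n, (z^k), (π^k), (ξ^k) ⊂ ℝ^m and scalars φ_k > 0 satisfy, for all k: z^k ≥ 0, s^k := Ax^k + z^k − b ≥ 0, π^k ≥ 0, ξ^k ≥ 0. Suppose φ_k → ∞, the sequence (z^k) is bounded, and K ⊆ ℕ is an infinite index set such that the sequences (s^k ∘ π^k), (z^k ∘ ξ^k), (Hx^k + c − Aᵀπ^k), (π^k + ξ^k − φ_k·1), and ((Hx^k + c − Aᵀπ^k)ᵀx^k) are all bounded for k ∈ K. Then z^k → 0 as k → ∞ along K, and the subsequence (x^k)_{k∈K} is bounded. (Lemma 3.4.) -/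
open Matrix Filter

open scoped MatrixOrder in
/-- Factorization of a positive semidefinite real matrix. -/
lemma aux_factor {n : ℕ} (H : Matrix (Fin n) (Fin n) ℝ) (hH : H.PosSemidef) :
    ∃ B : Matrix (Fin n) (Fin n) ℝ, H = Bᵀ * B := by
  obtain ⟨B, hB⟩ := CStarAlgebra.nonneg_iff_eq_star_mul_self.mp hH.nonneg
  refine ⟨B, ?_⟩
  rw [hB, Matrix.star_eq_conjTranspose, Matrix.conjTranspose_eq_transpose_of_trivial]

/-- Sup-norm bound for the dot product. -/
lemma aux_dot_le {m : ℕ} (u v : Fin m → ℝ) {M N : ℝ} (hu : ‖u‖ ≤ M) (hv : ‖v‖ ≤ N) :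
    u ⬝ᵥ v ≤ m * (M * N) := by
  have h : ∀ i ∈ Finset.univ, u i * v i ≤ M * N := by
    intro i _
    have h1 := (norm_le_pi_norm u i).trans hu
    have h2 := (norm_le_pi_norm v i).trans hv
    calc u i * v i ≤ |u i * v i| := le_abs_self _
      _ = ‖u i‖ * ‖v i‖ := by rw [abs_mul]; rfl
      _ ≤ M * N := mul_le_mul h1 h2 (norm_nonneg _) ((norm_nonneg _).trans h1)
  have := Finset.sum_le_sum h
  simpa [dotProduct] using this

/-- A vector is bounded when its images under `B` and `A` are, if the kernels meet trivially. -/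
lemma aux_bdd {n m p : ℕ} (B : Matrix (Fin p) (Fin n) ℝ) (A : Matrix (Fin m) (Fin n) ℝ)
    (hker : ∀ x : Fin n → ℝ, B *ᵥ x = 0 → A *ᵥ x = 0 → x = 0) :
    ∃ L : ℝ, 0 ≤ L ∧ ∀ d : Fin n → ℝ, ‖d‖ ≤ L * max ‖B *ᵥ d‖ ‖A *ᵥ d‖ := by
  let f : (Fin n → ℝ) →ₗ[ℝ] (Fin p → ℝ) × (Fin m → ℝ) := B.mulVecLin.prod A.mulVecLin
  have hf : LinearMap.ker f = ⊥ := by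
    rw [LinearMap.ker_eq_bot']
    intro d hd
    have h1 : (B *ᵥ d, A *ᵥ d) = (0 : (Fin p → ℝ) × (Fin m → ℝ)) := hd
    exact hker d (congrArg Prod.fst h1) (congrArg Prod.snd h1)
  obtain ⟨L, _, hL⟩ := LinearMap.exists_antilipschitzWith f hf
  refine ⟨L, L.2, fun d => ?_⟩
  have := hL.le_mul_dist d 0
  rw [map_zero, dist_zero_right, dist_zero_right] at this
  exact this

/-- Lemma 3.4: under the stated boundedness properties along the
infinite index set K, z^k → 0 along K and (x^k)_{k∈K} is bounded. -/
theorem z_to_zero_x_bounded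
    {n m : ℕ} (H : Matrix (Fin n) (Fin n) ℝ) (hH : H.PosSemidef)
    (c : Fin n → ℝ) (A : Matrix (Fin m) (Fin n) ℝ) (b : Fin m → ℝ)
    (hker : ∀ x : Fin n → ℝ, H.mulVec x = 0 → A.mulVec x = 0 → x = 0)
    (xhat : Fin n → ℝ) (pihat : Fin m → ℝ)
    (hfeas : b ≤ A.mulVec xhat)
    (hdeq : H.mulVec xhat + c = Aᵀ.mulVec pihat)
    (hdpos : ∀ i, 0 < pihat i)
    (x : ℕ → Fin n → ℝ) (z π ξ : ℕ → Fin m → ℝ) (φ : ℕ → ℝ)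
    (hφpos : ∀ k, 0 < φ k)
    (hz : ∀ k, 0 ≤ z k) (hs : ∀ k, 0 ≤ A.mulVec (x k) + z k - b)
    (hπ : ∀ k, 0 ≤ π k) (hξ : ∀ k, 0 ≤ ξ k)
    (hφ : Tendsto φ atTop atTop)
    (hzbd : ∃ M : ℝ, ∀ k, ‖z k‖ ≤ M)
    (K : Set ℕ) (hK : K.Infinite)
    (hbd1 : ∃ M : ℝ, ∀ k ∈ K, ‖(A.mulVec (x k) + z k - b) * π k‖ ≤ M)
    (hbd2 : ∃ M : ℝ, ∀ k ∈ K, ‖z k * ξ k‖ ≤ M)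
    (hbd3 : ∃ M : ℝ, ∀ k ∈ K, ‖H.mulVec (x k) + c - Aᵀ.mulVec (π k)‖ ≤ M)
    (hbd4 : ∃ M : ℝ, ∀ k ∈ K, ‖π k + ξ k - fun _ => φ k‖ ≤ M)
    (hbd5 : ∃ M : ℝ, ∀ k ∈ K,
      |(H.mulVec (x k) + c - Aᵀ.mulVec (π k)) ⬝ᵥ x k| ≤ M) :
    Tendsto (fun k => z k) (atTop ⊓ Filter.principal K) (nhds 0) ∧
    ∃ M : ℝ, ∀ k ∈ K, ‖x k‖ ≤ M := by
  obtain ⟨Mz, hMz⟩ := hzbd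
  obtain ⟨M1, h1⟩ := hbd1
  obtain ⟨M2, h2⟩ := hbd2
  obtain ⟨M3, h3⟩ := hbd3
  obtain ⟨M4, h4⟩ := hbd4
  obtain ⟨M5, h5⟩ := hbd5
  obtain ⟨B, hB⟩ := aux_factor H hH
  have hBk : ∀ x : Fin n → ℝ, B *ᵥ x = 0 → A *ᵥ x = 0 → x = 0 := by
    intro x hx hx'
    refine hker x ?_ hx'
    rw [hB, ← Matrix.mulVec_mulVec, hx, Matrix.mulVec_zero]
  obtain ⟨L, hL0, hL⟩ := aux_bdd B A hBk
  -- the key estimate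
  have key : ∃ C : ℝ, ∀ k ∈ K,
      (B *ᵥ (x k - xhat)) ⬝ᵥ (B *ᵥ (x k - xhat)) + π k ⬝ᵥ z k
        + pihat ⬝ᵥ (A *ᵥ (x k) + z k - b) ≤ C := by
    refine ⟨M5 + n * (M3 * ‖xhat‖) + m * (M1 * 1) + m * (‖pihat‖ * Mz)
      + pihat ⬝ᵥ (A *ᵥ xhat - b), fun k hk => ?_⟩
    have e1 := (le_abs_self _).trans (h5 k hk)
    have e2 := aux_dot_le (H *ᵥ (x k) + c - Aᵀ *ᵥ (π k)) (-xhat) (h3 k hk) (norm_neg xhat).le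
    have e3 := aux_dot_le ((A *ᵥ (x k) + z k - b) * π k) (fun _ => (1:ℝ)) (h1 k hk)
      ((pi_norm_le_iff_of_nonneg zero_le_one).2 (fun i => by simp))
    have e4 := aux_dot_le pihat (z k) le_rfl (hMz k)
    have e5 : 0 ≤ π k ⬝ᵥ (A *ᵥ xhat - b) :=
      dotProduct_nonneg_of_nonneg (hπ k) (sub_nonneg.2 hfeas)
    have e3' : ((A *ᵥ (x k) + z k - b) * π k) ⬝ᵥ (fun _ => (1:ℝ))
        = π k ⬝ᵥ (A *ᵥ (x k) + z k - b) := by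
      simp only [dotProduct, Pi.mul_apply, mul_one]
      exact Finset.sum_congr rfl (fun i _ => mul_comm _ _)
    rw [e3'] at e3
    have hQ : (B *ᵥ (x k - xhat)) ⬝ᵥ (B *ᵥ (x k - xhat))
        = (H *ᵥ (x k - xhat)) ⬝ᵥ (x k - xhat) := by
      rw [hB, ← Matrix.mulVec_mulVec, Matrix.mulVec_transpose, ← Matrix.dotProduct_mulVec]
    have hHd : H *ᵥ (x k - xhat)
        = (H *ᵥ (x k) + c - Aᵀ *ᵥ (π k)) + Aᵀ *ᵥ (π k - pihat) := by
      rw [Matrix.mulVec_sub, Matrix.mulVec_sub, ← hdeq]; abel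
    have hA : (Aᵀ *ᵥ (π k - pihat)) ⬝ᵥ (x k - xhat)
        = (π k - pihat) ⬝ᵥ ((A *ᵥ (x k) + z k - b) - z k - (A *ᵥ xhat - b)) := by
      rw [Matrix.mulVec_transpose, ← Matrix.dotProduct_mulVec, Matrix.mulVec_sub]
      congr 1; abel
    rw [hQ, hHd, add_dotProduct, hA]
    rw [dotProduct_neg] at e2
    rw [dotProduct_sub (H *ᵥ (x k) + c - Aᵀ *ᵥ (π k))]
    rw [sub_dotProduct (π k), dotProduct_sub (π k), dotProduct_sub (π k), dotProduct_sub pihat,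
      dotProduct_sub pihat]
    linarith
  obtain ⟨C, hC⟩ := key
  have q1 : ∀ k, 0 ≤ (B *ᵥ (x k - xhat)) ⬝ᵥ (B *ᵥ (x k - xhat)) := fun k =>
    Finset.sum_nonneg fun i _ => mul_self_nonneg _
  have q2 : ∀ k, 0 ≤ π k ⬝ᵥ z k := fun k => dotProduct_nonneg_of_nonneg (hπ k) (hz k)
  have q3 : ∀ k, 0 ≤ pihat ⬝ᵥ (A *ᵥ (x k) + z k - b) := fun k =>
    dotProduct_nonneg_of_nonneg (fun i => (hdpos i).le) (hs k)
  constructor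
  · rw [tendsto_pi_nhds]
    intro i
    have hφ' : Tendsto φ (atTop ⊓ Filter.principal K) atTop := hφ.mono_left inf_le_left
    have hlim : Tendsto (fun k => (C + M2) / (φ k - M4)) (atTop ⊓ Filter.principal K)
        (nhds 0) :=
      Tendsto.div_atTop tendsto_const_nhds (tendsto_atTop_add_const_right _ (-M4) hφ')
    have hKe : ∀ᶠ k in atTop ⊓ Filter.principal K, k ∈ K :=
      mem_inf_of_right (mem_principal_self K)
    refine tendsto_of_tendsto_of_tendsto_of_le_of_le' tendsto_const_nhds hlim
      (Eventually.of_forall fun k => hz k i) ?_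
    filter_upwards [hKe, hφ'.eventually_gt_atTop M4] with k hk hkφ
    rw [le_div_iff₀ (sub_pos.2 hkφ)]
    have a1 : π k i * z k i ≤ π k ⬝ᵥ z k :=
      Finset.single_le_sum (f := fun i => π k i * z k i)
        (fun j _ => mul_nonneg (hπ k j) (hz k j)) (Finset.mem_univ i)
    have a2 : z k i * ξ k i ≤ M2 :=
      (le_abs_self _).trans ((norm_le_pi_norm (z k * ξ k) i).trans (h2 k hk))
    have a3 : -(π k i + ξ k i - φ k) ≤ M4 :=
      (neg_le_abs _).trans ((norm_le_pi_norm (π k + ξ k - fun _ => φ k) i).trans (h4 k hk))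
    have a4 : z k i * (φ k - M4) ≤ z k i * (π k i + ξ k i) :=
      mul_le_mul_of_nonneg_left (by linarith) (hz k i)
    have := hC k hk
    have := q1 k
    have := q3 k
    linarith
  · have hS : ∃ S : ℝ, 0 ≤ S ∧ ∀ k ∈ K, ‖A *ᵥ (x k) + z k - b‖ ≤ S := by
      refine ⟨∑ i, |C| / pihat i,
        Finset.sum_nonneg fun i _ => div_nonneg (abs_nonneg _) (hdpos i).le, fun k hk => ?_⟩
      rw [pi_norm_le_iff_of_nonneg
        (Finset.sum_nonneg fun i _ => div_nonneg (abs_nonneg _) (hdpos i).le)]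
      intro i
      have a0 := hs k i
      have a1 : pihat i * (A *ᵥ (x k) + z k - b) i ≤ pihat ⬝ᵥ (A *ᵥ (x k) + z k - b) :=
        Finset.single_le_sum (f := fun i => pihat i * (A *ᵥ (x k) + z k - b) i)
          (fun j _ => mul_nonneg (hdpos j).le (hs k j)) (Finset.mem_univ i)
      have a2 : |C| / pihat i ≤ ∑ i, |C| / pihat i :=
        Finset.single_le_sum (f := fun i => |C| / pihat i)
          (fun j _ => div_nonneg (abs_nonneg _) (hdpos j).le) (Finset.mem_univ i)
      refine le_trans ?_ a2
      rw [Real.norm_of_nonneg a0, le_div_iff₀ (hdpos i)]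
      have := hC k hk
      have := q1 k
      have := q2 k
      have := le_abs_self C
      linarith
    obtain ⟨S, hS0, hS⟩ := hS
    refine ⟨L * max (Real.sqrt |C|) (S + Mz + ‖A *ᵥ xhat - b‖) + ‖xhat‖, fun k hk => ?_⟩
    have b1 : ‖B *ᵥ (x k - xhat)‖ ≤ Real.sqrt |C| := by
      rw [pi_norm_le_iff_of_nonneg (Real.sqrt_nonneg _)]
      intro i
      apply Real.abs_le_sqrt
      have a1 : (B *ᵥ (x k - xhat)) i * (B *ᵥ (x k - xhat)) i
          ≤ (B *ᵥ (x k - xhat)) ⬝ᵥ (B *ᵥ (x k - xhat)) :=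
        Finset.single_le_sum (f := fun i => (B *ᵥ (x k - xhat)) i * (B *ᵥ (x k - xhat)) i)
          (fun j _ => mul_self_nonneg _) (Finset.mem_univ i)
      have := hC k hk
      have := q3 k
      have := q2 k
      have := le_abs_self C
      rw [sq]
      linarith
    have b2 : ‖A *ᵥ (x k - xhat)‖ ≤ S + Mz + ‖A *ᵥ xhat - b‖ := by
      have e : A *ᵥ (x k - xhat) = (A *ᵥ (x k) + z k - b) - z k - (A *ᵥ xhat - b) := by
        rw [Matrix.mulVec_sub]; abel
      rw [e]
      have i1 := norm_sub_le ((A *ᵥ (x k) + z k - b) - z k) (A *ᵥ xhat - b)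
      have i2 := norm_sub_le (A *ᵥ (x k) + z k - b) (z k)
      have := hS k hk
      have := hMz k
      linarith
    have b3 := (hL (x k - xhat)).trans (mul_le_mul_of_nonneg_left (max_le_max b1 b2) hL0)
    have b4 := norm_add_le (x k - xhat) xhat
    rw [sub_add_cancel] at b4
    linarith
end

section
/- Let sequences (x^k) ⊂ ℝ^n, (z^k), (π^k), (ξ^k) ⊂ ℝ^m and scalars φ_k > 0 satisfy, for all k: z^k ≥ 0, s^k := Ax^k + z^k − b ≥ 0, π^k ≥ 0, ξ^k ≥ 0, and φ_k → ∞. Suppose K ⊆ ℕ is an infinite index set such that for k ∈ K the sequences (s^k ∘ π^k), (Hx^k + c − Aᵀπ^k), (π^k + ξ^k − φ_k·1), and (φ_k / max{1, ‖π^k‖∞}) are bounded, z^k → 0 along K, and (x^k)_{k∈K} is bounded. Then for every limit point x* of (x^k)_{k∈K} there exists π̄ ∈ ℝ^m with π̄ ≥ 0, π̄ ≠ 0, Aᵀπ̄ = 0, and π̄ᵢ·(Ax* − b)ᵢ = 0 for every i. (Lemma 3.5.) -/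
open Matrix Filter

theorem aux_smul_zero {d : ℕ} (r : ℕ → ℝ) (v : ℕ → Fin d → ℝ) (M : ℝ)
    (hr : Tendsto r atTop (nhds 0)) (hv : ∀ j, ‖v j‖ ≤ M) :
    Tendsto (fun j => r j • v j) atTop (nhds 0) := by
  have h1 : Tendsto (fun j => |r j| * M) atTop (nhds 0) := by
    simpa using hr.abs.mul_const M
  refine squeeze_zero_norm (fun j => ?_) h1
  rw [norm_smul, Real.norm_eq_abs]
  exact mul_le_mul_of_nonneg_left (hv j) (abs_nonneg _)

/-- Lemma 3.5: existence of a nonzero nonnegative π̄ with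
Aᵀπ̄ = 0 complementary to the active constraints at any limit point. -/
theorem limit_point_degenerate_multiplier
    {n m : ℕ} (H : Matrix (Fin n) (Fin n) ℝ) (hH : H.PosSemidef)
    (c : Fin n → ℝ) (A : Matrix (Fin m) (Fin n) ℝ) (b : Fin m → ℝ)
    (x : ℕ → Fin n → ℝ) (z π ξ : ℕ → Fin m → ℝ) (φ : ℕ → ℝ)
    (hφpos : ∀ k, 0 < φ k)
    (hz : ∀ k, 0 ≤ z k) (hs : ∀ k, 0 ≤ A.mulVec (x k) + z k - b)
    (hπ : ∀ k, 0 ≤ π k) (hξ : ∀ k, 0 ≤ ξ k)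
    (hφ : Tendsto φ atTop atTop)
    (K : Set ℕ) (hK : K.Infinite)
    (hbd1 : ∃ M : ℝ, ∀ k ∈ K, ‖(A.mulVec (x k) + z k - b) * π k‖ ≤ M)
    (hbd2 : ∃ M : ℝ, ∀ k ∈ K, ‖H.mulVec (x k) + c - Aᵀ.mulVec (π k)‖ ≤ M)
    (hbd3 : ∃ M : ℝ, ∀ k ∈ K, ‖π k + ξ k - fun _ => φ k‖ ≤ M)
    (hbd4 : ∃ M : ℝ, ∀ k ∈ K, φ k / max 1 ‖π k‖ ≤ M)
    (hz0 : Tendsto (fun k => z k) (atTop ⊓ Filter.principal K) (nhds 0))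
    (hxbd : ∃ M : ℝ, ∀ k ∈ K, ‖x k‖ ≤ M) :
    ∀ xstar : Fin n → ℝ,
      (∃ σ : ℕ → ℕ, StrictMono σ ∧ (∀ j, σ j ∈ K) ∧
        Tendsto (fun j => x (σ j)) atTop (nhds xstar)) →
      ∃ pibar : Fin m → ℝ, 0 ≤ pibar ∧ pibar ≠ 0 ∧
        Aᵀ.mulVec pibar = 0 ∧
        ∀ i, pibar i * (A.mulVec xstar - b) i = 0 := by
  rintro xs ⟨σ, hσ, hσK, hx⟩
  obtain ⟨M1, h1⟩ := hbd1
  obtain ⟨M2, h2⟩ := hbd2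
  obtain ⟨M4, h4⟩ := hbd4
  have hNpos : ∀ k, 0 < max 1 ‖π k‖ := fun k => lt_of_lt_of_le one_pos (le_max_left _ _)
  have hM4 : 0 < M4 := lt_of_lt_of_le (div_pos (hφpos _) (hNpos _)) (h4 _ (hσK 0))
  have hN : Tendsto (fun j => max 1 ‖π (σ j)‖) atTop atTop := by
    have := (hφ.comp hσ.tendsto_atTop).atTop_div_const hM4
    refine tendsto_atTop_mono (fun j => ?_) this
    have := h4 _ (hσK j)
    rw [div_le_iff₀ (hNpos _)] at this
    simp only [Function.comp]
    rw [div_le_iff₀ hM4]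
    linarith
  have hr := tendsto_inv_atTop_zero.comp hN
  obtain ⟨p, hp, τ, hτ, hlim⟩ := (isCompact_closedBall (0 : Fin m → ℝ) 1).tendsto_subseq
    (x := fun j => (max 1 ‖π (σ j)‖)⁻¹ • π (σ j)) (fun j => by
      rw [mem_closedBall_zero_iff, norm_smul, norm_inv, Real.norm_of_nonneg (hNpos _).le,
        inv_mul_le_iff₀ (hNpos _), mul_one]
      exact le_max_right _ _)
  have hτ' := hτ.tendsto_atTop
  have hr' := hr.comp hτ'
  have hx' := hx.comp hτ'
  have hz' : Tendsto (fun j => z (σ (τ j))) atTop (nhds 0) := by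
    refine hz0.comp (tendsto_inf.2 ⟨hσ.tendsto_atTop.comp hτ', ?_⟩)
    exact tendsto_principal.2 (Eventually.of_forall fun j => hσK _)
  refine ⟨p, ?_, ?_, ?_, ?_⟩
  · refine ge_of_tendsto' hlim (fun j => ?_)
    exact smul_nonneg (inv_nonneg.2 (hNpos _).le) (hπ _)
  · have hn : Tendsto (fun _ : ℕ => (1:ℝ)) atTop (nhds ‖p‖) := by
      refine hlim.norm.congr' ?_
      filter_upwards [(hN.comp hτ').eventually_gt_atTop 1] with j hj
      simp only [Function.comp] at hj ⊢
      have h : max 1 ‖π (σ (τ j))‖ = ‖π (σ (τ j))‖ := by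
        rcases lt_max_iff.1 hj with h | h
        · exact absurd h (lt_irrefl _)
        · exact max_eq_right h.le
      rw [norm_smul, norm_inv, Real.norm_of_nonneg (hNpos _).le]
      have := hNpos (σ (τ j))
      rw [h] at this ⊢
      exact inv_mul_cancel₀ this.ne'
    have h := tendsto_nhds_unique hn tendsto_const_nhds
    intro h0
    rw [h0, norm_zero] at h
    exact zero_ne_one h
  · have hA : Tendsto (fun j => Aᵀ.mulVec ((max 1 ‖π (σ (τ j))‖)⁻¹ • π (σ (τ j)))) atTop
        (nhds (Aᵀ.mulVec p)) :=
      ((Continuous.matrix_mulVec continuous_const continuous_id).tendsto p).comp hlim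
    have hH1 : Tendsto (fun j => H.mulVec (x (σ (τ j))) + c) atTop (nhds (H.mulVec xs + c)) :=
      (((Continuous.matrix_mulVec continuous_const continuous_id).tendsto xs).comp hx').add_const c
    have hB := (hr'.smul hH1).sub (aux_smul_zero _ _ M2 hr' (fun j => h2 _ (hσK (τ j))))
    rw [zero_smul, sub_zero] at hB
    refine tendsto_nhds_unique hA (hB.congr fun j => ?_)
    simp only [Function.comp]
    rw [mulVec_smul, ← smul_sub, sub_sub_cancel]
  · have hS : Tendsto (fun j => A.mulVec (x (σ (τ j))) + z (σ (τ j)) - b) atTop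
        (nhds (A.mulVec xs + 0 - b)) :=
      ((((Continuous.matrix_mulVec continuous_const continuous_id).tendsto xs).comp hx').add
        hz').sub_const b
    rw [add_zero] at hS
    have hP := hlim.mul hS
    have h0 := aux_smul_zero _ _ M1 hr' (fun j => h1 _ (hσK (τ j)))
    have h := tendsto_nhds_unique hP (h0.congr fun j => by
      simp only [Function.comp]
      rw [smul_mul_assoc, mul_comm])
    intro i
    exact congrFun h i
end

section
/- Let φ̂ > 0. Suppose sequences (x^k) ⊂ ℝ^n and (z^k), (π^k), (ξ^k) ⊂ ℝ^m satisfy, for all k: Ax^k + z^k ≥ b, z^k ≥ 0, π^k ≥ 0, ξ^k ≥ 0, and the sequence ((x^k, z^k)) is bounded. Suppose further that, with s^k := Ax^k + z^k − b, one has s^k ∘ π^k → 0, z^k ∘ ξ^k → 0, Hx^k + c − Aᵀπ^k → 0, π^k + ξ^k − φ̂·1 → 0, and limsup_k ‖π^k‖∞ < φ̂. Then z^k → 0, and every limit point x* of (x^k) is an optimal solution of (P). (Core of Proposition 3.1.) -/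
open Matrix Filter

/-- core of Proposition 3.1: with penalty parameter eventually
exceeding limsup ‖π^k‖∞, z^k → 0 and every limit point of (x^k) solves (P). -/
theorem convergence_for_constant_penalty
    {n m : ℕ} (H : Matrix (Fin n) (Fin n) ℝ) (hH : H.PosSemidef)
    (c : Fin n → ℝ) (A : Matrix (Fin m) (Fin n) ℝ) (b : Fin m → ℝ)
    (φhat : ℝ) (hφhat : 0 < φhat)
    (x : ℕ → Fin n → ℝ) (z π ξ : ℕ → Fin m → ℝ)
    (hfeas : ∀ k, b ≤ A.mulVec (x k) + z k) (hz : ∀ k, 0 ≤ z k)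
    (hπ : ∀ k, 0 ≤ π k) (hξ : ∀ k, 0 ≤ ξ k)
    (hbd : ∃ M : ℝ, ∀ k, ‖x k‖ ≤ M ∧ ‖z k‖ ≤ M)
    (hcomp1 : Tendsto (fun k => (A.mulVec (x k) + z k - b) * π k) atTop (nhds 0))
    (hcomp2 : Tendsto (fun k => z k * ξ k) atTop (nhds 0))
    (hstat : Tendsto (fun k => H.mulVec (x k) + c - Aᵀ.mulVec (π k)) atTop (nhds 0))
    (hsum : Tendsto (fun k => π k + ξ k - fun _ => φhat) atTop (nhds 0))
    (hlimsup : ∃ r : ℝ, r < φhat ∧ ∀ᶠ k in atTop, ‖π k‖ ≤ r) :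
    Tendsto (fun k => z k) atTop (nhds 0) ∧
    ∀ xstar : Fin n → ℝ,
      (∃ σ : ℕ → ℕ, StrictMono σ ∧ Tendsto (fun j => x (σ j)) atTop (nhds xstar)) →
      b ≤ A.mulVec xstar ∧
        ∀ x' : Fin n → ℝ, b ≤ A.mulVec x' → qObj H c xstar ≤ qObj H c x' := by
  obtain ⟨r, hr, hev⟩ := hlimsup
  have hzlim : Tendsto (fun k => z k) atTop (nhds 0) := by
    rw [tendsto_pi_nhds] at hcomp2 hsum ⊢
    intro i
    have h1 := hcomp2 i
    have h2 := hsum i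
    have hδ : 0 < (φhat - r) / 2 := by linarith
    have h3 : Tendsto (fun k => (z k * ξ k) i / ((φhat - r) / 2)) atTop (nhds 0) := by
      simpa using h1.div_const ((φhat - r) / 2)
    refine tendsto_of_tendsto_of_tendsto_of_le_of_le' tendsto_const_nhds h3
      (Eventually.of_forall fun k => hz k i) ?_
    have h4 : ∀ᶠ k in atTop, -((φhat - r) / 2) < π k i + ξ k i - φhat :=
      h2.eventually_const_lt (by simpa only [Pi.zero_apply, neg_lt_zero] using hδ)
    filter_upwards [h4, hev] with k hk hk2
    have h5 : π k i ≤ r := (le_abs_self _).trans ((norm_le_pi_norm (π k) i).trans hk2)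
    rw [le_div_iff₀ hδ]
    exact mul_le_mul_of_nonneg_left (by linarith) (hz k i)
  refine ⟨hzlim, ?_⟩
  rintro xs ⟨σ, hσ, hx⟩
  have hσt := hσ.tendsto_atTop
  have hcA : Continuous fun y : Fin n → ℝ => A.mulVec y := by fun_prop
  constructor
  · have h1 : Tendsto (fun j => A.mulVec (x (σ j)) + z (σ j)) atTop (nhds (A.mulVec xs + 0)) :=
      ((hcA.tendsto xs).comp hx).add (hzlim.comp hσt)
    rw [add_zero] at h1
    exact ge_of_tendsto' h1 fun j => hfeas (σ j)
  · intro x' hx'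
    have key : ∀ k, qObj H c (x k) +
        ((H.mulVec (x k) + c - Aᵀ.mulVec (π k)) ⬝ᵥ (x' - x k)
          - ∑ i, ((A.mulVec (x k) + z k - b) * π k) i) ≤ qObj H c x' := by
      intro k
      have hp : 0 ≤ (x' - x k) ⬝ᵥ H.mulVec (x' - x k) := by
        simpa using hH.dotProduct_mulVec_nonneg (x' - x k)
      have hsym : x k ⬝ᵥ H.mulVec x' = x' ⬝ᵥ H.mulVec (x k) := by
        have hT : Hᵀ = H := by simpa [conjTranspose_eq_transpose_of_trivial] using hH.isHermitian.eq
        rw [dotProduct_mulVec, ← mulVec_transpose, hT, dotProduct_comm]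
      have hA : (Aᵀ.mulVec (π k)) ⬝ᵥ (x' - x k) = π k ⬝ᵥ A.mulVec (x' - x k) := by
        rw [mulVec_transpose, dotProduct_mulVec]
      have hs : 0 ≤ π k ⬝ᵥ A.mulVec (x' - x k)
          + ∑ i, ((A.mulVec (x k) + z k - b) * π k) i := by
        rw [dotProduct, ← Finset.sum_add_distrib]
        refine Finset.sum_nonneg fun i _ => ?_
        have e1 := hx' i
        have e2 := hz k i
        have e3 := hπ k i
        simp only [mulVec_sub, Pi.mul_apply, Pi.add_apply, Pi.sub_apply, Pi.zero_apply] at *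
        nlinarith [mul_nonneg e3 e2, mul_nonneg e3 (sub_nonneg.2 e1)]
      rw [sub_dotProduct, hA]
      simp only [qObj, mulVec_sub, dotProduct_sub, sub_dotProduct, add_dotProduct] at *
      rw [dotProduct_comm (H.mulVec (x k)) x', dotProduct_comm (H.mulVec (x k)) (x k)]
      linarith
    have hq : Continuous fun y => qObj H c y := by
      unfold qObj
      simp only [dotProduct, mulVec]
      fun_prop
    have t1 : Tendsto (fun j => qObj H c (x (σ j))) atTop (nhds (qObj H c xs)) :=
      (hq.tendsto xs).comp hx
    have t2 : Tendsto (fun j => (H.mulVec (x (σ j)) + c - Aᵀ.mulVec (π (σ j))) ⬝ᵥ (x' - x (σ j)))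
        atTop (nhds (0 ⬝ᵥ (x' - xs))) := by
      simp only [dotProduct]
      refine tendsto_finsetSum _ fun i _ => Tendsto.mul ?_ ?_
      · exact (tendsto_pi_nhds.1 hstat i).comp hσt
      · exact tendsto_const_nhds.sub (tendsto_pi_nhds.1 hx i)
    have t3 : Tendsto (fun j => ∑ i, ((A.mulVec (x (σ j)) + z (σ j) - b) * π (σ j)) i)
        atTop (nhds (∑ _i : Fin m, (0 : ℝ))) :=
      tendsto_finsetSum _ fun i _ => (tendsto_pi_nhds.1 hcomp1 i).comp hσt
    have t4 := t1.add (t2.sub t3)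
    simp only [zero_dotProduct, Finset.sum_const_zero, sub_zero, add_zero] at t4
    exact le_of_tendsto' t4 fun j => key (σ j)
end

section
/- Let φ > 0 and suppose (x*, z*, y*, π*, ξ*, η*, ζ*) satisfies the optimality conditions of the penalized primal–dual pair with equality constraints: Hx* + c − Aᵀπ* − Cᵀ(η* − ζ*) = 0, π* + ξ* = φ·1, η* + ζ* = φ·1, s*ᵢπ*ᵢ = 0 and z*ᵢξ*ᵢ = 0 for all i, (t₊*)ⱼη*ⱼ = 0 and (t₋*)ⱼζ*ⱼ = 0 for all j, and s*, z*, t₊*, t₋*, π*, ξ*, η*, ζ* ≥ 0, where s* := Ax* + z* − b, t₊* := Cx* + y* − d, and t₋* := −Cx* + y* + d. If φ > max{‖π*‖∞, ‖η* − ζ*‖∞}, then z* = 0 and y* = 0; moreover Ax* ≥ b, Cx* = d, and x* is an optimal solution of (P). (Lemma 4.1.) -/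
open Matrix Filter

/-- Lemma 4.1: exactness of the ℓ1 penalty with equality
constraints. -/
theorem exact_penalty_with_equalities
    {n m p : ℕ} (H : Matrix (Fin n) (Fin n) ℝ) (hH : H.PosSemidef)
    (c : Fin n → ℝ) (A : Matrix (Fin m) (Fin n) ℝ) (b : Fin m → ℝ)
    (C : Matrix (Fin p) (Fin n) ℝ) (d : Fin p → ℝ)
    (φ : ℝ) (hφ : 0 < φ)
    (xstar : Fin n → ℝ) (zstar pistar xistar : Fin m → ℝ)
    (ystar etastar zetastar : Fin p → ℝ)
    (hstat : H.mulVec xstar + c - Aᵀ.mulVec pistar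
      - Cᵀ.mulVec (etastar - zetastar) = 0)
    (hsum1 : pistar + xistar = fun _ => φ)
    (hsum2 : etastar + zetastar = fun _ => φ)
    (hcomp1 : ∀ i, (A.mulVec xstar + zstar - b) i * pistar i = 0)
    (hcomp2 : ∀ i, zstar i * xistar i = 0)
    (hcomp3 : ∀ j, (C.mulVec xstar + ystar - d) j * etastar j = 0)
    (hcomp4 : ∀ j, (-C.mulVec xstar + ystar + d) j * zetastar j = 0)
    (hs : 0 ≤ A.mulVec xstar + zstar - b) (hz : 0 ≤ zstar)
    (htp : 0 ≤ C.mulVec xstar + ystar - d)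
    (htm : 0 ≤ -C.mulVec xstar + ystar + d)
    (hpi : 0 ≤ pistar) (hxi : 0 ≤ xistar)
    (heta : 0 ≤ etastar) (hzeta : 0 ≤ zetastar)
    (hbig : max ‖pistar‖ ‖etastar - zetastar‖ < φ) :
    zstar = 0 ∧ ystar = 0 ∧ b ≤ A.mulVec xstar ∧ C.mulVec xstar = d ∧
      ∀ x : Fin n → ℝ, b ≤ A.mulVec x → C.mulVec x = d →
        qObj H c xstar ≤ qObj H c x := by
  have hn1 : ‖pistar‖ < φ := lt_of_le_of_lt (le_max_left _ _) hbig
  have hn2 : ‖etastar - zetastar‖ < φ := lt_of_le_of_lt (le_max_right _ _) hbig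
  have hz0 : zstar = 0 := by
    funext i
    have h1 : |pistar i| < φ := lt_of_le_of_lt (norm_le_pi_norm pistar i) hn1
    have h2 := congrFun hsum1 i
    simp only [Pi.add_apply] at h2
    have h3 := (abs_lt.mp h1).2
    rcases mul_eq_zero.mp (hcomp2 i) with h | h
    · exact h
    · linarith
  have ht : ∀ j, (C.mulVec xstar + ystar - d) j = 0 ∧ (-C.mulVec xstar + ystar + d) j = 0 := by
    intro j
    have h1 : |(etastar - zetastar) j| < φ :=
      lt_of_le_of_lt (norm_le_pi_norm (etastar - zetastar) j) hn2
    have h2 := congrFun hsum2 j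
    simp only [Pi.add_apply] at h2
    simp only [Pi.sub_apply] at h1
    obtain ⟨h3, h4⟩ := abs_lt.mp h1
    constructor
    · rcases mul_eq_zero.mp (hcomp3 j) with h | h
      · exact h
      · linarith
    · rcases mul_eq_zero.mp (hcomp4 j) with h | h
      · exact h
      · linarith
  have hy0 : ystar = 0 := by
    funext j
    obtain ⟨h1, h2⟩ := ht j
    simp only [Pi.add_apply, Pi.sub_apply, Pi.neg_apply] at h1 h2
    simp only [Pi.zero_apply]
    linarith
  have hC : C.mulVec xstar = d := by
    funext j
    obtain ⟨h1, h2⟩ := ht j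
    simp only [Pi.add_apply, Pi.sub_apply, Pi.neg_apply] at h1 h2
    linarith
  subst hz0
  refine ⟨rfl, hy0, ?_, hC, ?_⟩
  · simpa using hs
  intro x hAx hCx
  obtain ⟨u, rfl⟩ : ∃ u, x = xstar + u := ⟨x - xstar, by simp⟩
  have hCu : C.mulVec u = 0 := by
    rw [Matrix.mulVec_add, hC] at hCx
    simpa using hCx
  have hg : H.mulVec xstar + c = Aᵀ.mulVec pistar + Cᵀ.mulVec (etastar - zetastar) := by
    rw [sub_sub, sub_eq_zero] at hstat
    exact hstat
  have hgu : (H.mulVec xstar + c) ⬝ᵥ u = pistar ⬝ᵥ A.mulVec u := by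
    rw [hg, add_dotProduct, Matrix.mulVec_transpose, Matrix.mulVec_transpose,
      ← Matrix.dotProduct_mulVec, ← Matrix.dotProduct_mulVec, hCu, dotProduct_zero, add_zero]
  have hnn : 0 ≤ pistar ⬝ᵥ A.mulVec u := by
    apply Finset.sum_nonneg
    intro i _
    have h1 := hcomp1 i
    have h2 := hAx i
    have h3 := hpi i
    simp only [Matrix.mulVec_add, Pi.add_apply, Pi.sub_apply, Pi.zero_apply] at h1 h2 h3
    nlinarith [mul_nonneg h3 (sub_nonneg.mpr h2)]
  have hquad : 0 ≤ u ⬝ᵥ H.mulVec u := by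
    simpa using hH.dotProduct_mulVec_nonneg u
  have hsym : xstar ⬝ᵥ H.mulVec u = u ⬝ᵥ H.mulVec xstar := by
    have hT : Hᵀ = H := by simpa [Matrix.IsHermitian] using hH.isHermitian
    rw [Matrix.dotProduct_mulVec, ← Matrix.mulVec_transpose, hT, dotProduct_comm]
  rw [add_dotProduct, dotProduct_comm (H.mulVec xstar) u] at hgu
  unfold qObj
  simp only [Matrix.mulVec_add, add_dotProduct, dotProduct_add]
  linarith
end

section
/- Let (x̂, π̂, η̂, ζ̂) be dual-feasible, let (x, z, y) be feasible for the penalized problem (P̃_φ), and suppose φ > M, where M := max{‖π̂‖∞, 2‖η̂‖∞, 2‖ζ̂‖∞}. Then max{‖z‖∞, ‖y‖∞} ≤ (f(x) + φ·(1ᵀz + 1ᵀy) − ψ(x̂, π̂, η̂, ζ̂)) / ((1/2)·(φ − M)). (Lemma 4.3.) -/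
open Matrix Filter

/-- The dual objective with equality constraints:
ψ(x̂, π̂, η̂, ζ̂) = −(1/2)x̂ᵀHx̂ + bᵀπ̂ + dᵀ(η̂ − ζ̂). -/
noncomputable def dObjEq {n m p : ℕ} (H : Matrix (Fin n) (Fin n) ℝ)
    (b : Fin m → ℝ) (d : Fin p → ℝ) (xhat : Fin n → ℝ) (pihat : Fin m → ℝ)
    (etahat zetahat : Fin p → ℝ) : ℝ :=
  -(1 / 2) * (xhat ⬝ᵥ H.mulVec xhat) + b ⬝ᵥ pihat + d ⬝ᵥ (etahat - zetahat)

/-- Lemma 4.3: bound on the relaxation variables with equality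
constraints. -/
theorem relaxation_bound_with_equalities
    {n m p : ℕ} (H : Matrix (Fin n) (Fin n) ℝ) (hH : H.PosSemidef)
    (c : Fin n → ℝ) (A : Matrix (Fin m) (Fin n) ℝ) (b : Fin m → ℝ)
    (C : Matrix (Fin p) (Fin n) ℝ) (d : Fin p → ℝ)
    (xhat : Fin n → ℝ) (pihat : Fin m → ℝ) (etahat zetahat : Fin p → ℝ)
    (hdeq : H.mulVec xhat + c - Aᵀ.mulVec pihat
      - Cᵀ.mulVec (etahat - zetahat) = 0)
    (hpi : 0 ≤ pihat) (heta : 0 ≤ etahat) (hzeta : 0 ≤ zetahat)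
    (x : Fin n → ℝ) (z : Fin m → ℝ) (y : Fin p → ℝ)
    (hfeas1 : b ≤ A.mulVec x + z) (hz : 0 ≤ z)
    (hfeas2 : d ≤ C.mulVec x + y) (hfeas3 : -d ≤ -C.mulVec x + y)
    (φ : ℝ) (hφ : max ‖pihat‖ (max (2 * ‖etahat‖) (2 * ‖zetahat‖)) < φ) :
    max ‖z‖ ‖y‖ ≤
      (qObj H c x + φ * ((∑ i, z i) + ∑ j, y j)
        - dObjEq H b d xhat pihat etahat zetahat) /
      ((1 / 2) * (φ - max ‖pihat‖ (max (2 * ‖etahat‖) (2 * ‖zetahat‖)))) := by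
  set M := max ‖pihat‖ (max (2 * ‖etahat‖) (2 * ‖zetahat‖)) with hM
  have hy : ∀ j, 0 ≤ y j := by
    intro j
    have h2 := hfeas2 j
    have h3 := hfeas3 j
    simp only [Pi.add_apply, Pi.neg_apply] at h2 h3
    linarith
  have hz' : ∀ i, 0 ≤ z i := fun i => hz i
  have hpiM : ∀ i, pihat i ≤ M := fun i =>
    (le_abs_self _).trans ((norm_le_pi_norm pihat i).trans (le_max_left _ _))
  have hetaM : ∀ j, 2 * etahat j ≤ M := fun j => by
    have h1 : etahat j ≤ ‖etahat‖ := (le_abs_self _).trans (norm_le_pi_norm etahat j)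
    have h2 : 2 * ‖etahat‖ ≤ M := (le_max_left _ _).trans (le_max_right _ _)
    linarith
  have hzetaM : ∀ j, 2 * zetahat j ≤ M := fun j => by
    have h1 : zetahat j ≤ ‖zetahat‖ := (le_abs_self _).trans (norm_le_pi_norm zetahat j)
    have h2 : 2 * ‖zetahat‖ ≤ M := (le_max_right _ _).trans (le_max_right _ _)
    linarith
  have hc : c = Aᵀ.mulVec pihat + Cᵀ.mulVec (etahat - zetahat) - H.mulVec xhat := by
    funext k
    have := congrFun hdeq k
    simp only [Pi.add_apply, Pi.sub_apply, Pi.zero_apply] at this ⊢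
    linarith
  have hsymm : H.mulVec xhat ⬝ᵥ x = xhat ⬝ᵥ H.mulVec x := by
    have hT : Hᵀ = H := by simpa [Matrix.IsHermitian] using hH.isHermitian
    rw [Matrix.dotProduct_mulVec, ← Matrix.mulVec_transpose, hT]
  have hcx : c ⬝ᵥ x = pihat ⬝ᵥ A.mulVec x + (etahat - zetahat) ⬝ᵥ C.mulVec x
      - xhat ⬝ᵥ H.mulVec x := by
    rw [hc, sub_dotProduct, add_dotProduct, hsymm, Matrix.mulVec_transpose,
      Matrix.mulVec_transpose, ← Matrix.dotProduct_mulVec, ← Matrix.dotProduct_mulVec]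
  have hquad : 0 ≤ x ⬝ᵥ H.mulVec x - 2 * (xhat ⬝ᵥ H.mulVec x) + xhat ⬝ᵥ H.mulVec xhat := by
    have h := hH.dotProduct_mulVec_nonneg (x - xhat)
    simp only [star_trivial, Matrix.mulVec_sub, sub_dotProduct, dotProduct_sub] at h
    have h2 : x ⬝ᵥ H.mulVec xhat = xhat ⬝ᵥ H.mulVec x := by rw [dotProduct_comm, hsymm]
    linarith
  have hS1 : b ⬝ᵥ pihat - pihat ⬝ᵥ A.mulVec x ≤ M * ∑ i, z i := by
    rw [dotProduct, dotProduct, ← Finset.sum_sub_distrib, Finset.mul_sum]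
    refine Finset.sum_le_sum fun i _ => ?_
    have h1 := hfeas1 i
    have h2 : 0 ≤ pihat i := hpi i
    simp only [Pi.add_apply] at h1
    nlinarith [mul_nonneg h2 (sub_nonneg.2 h1), mul_nonneg (sub_nonneg.2 (hpiM i)) (hz' i)]
  have hS2 : d ⬝ᵥ (etahat - zetahat) - (etahat - zetahat) ⬝ᵥ C.mulVec x ≤ M * ∑ j, y j := by
    rw [dotProduct, dotProduct, ← Finset.sum_sub_distrib, Finset.mul_sum]
    refine Finset.sum_le_sum fun j _ => ?_
    have h1 := hfeas2 j
    have h3 := hfeas3 j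
    have h2 : 0 ≤ etahat j := heta j
    have h4 : 0 ≤ zetahat j := hzeta j
    simp only [Pi.add_apply, Pi.neg_apply, Pi.sub_apply] at h1 h3 ⊢
    nlinarith [mul_nonneg h2 (sub_nonneg.2 h1), mul_nonneg h4 (sub_nonneg.2 h3),
      mul_nonneg (sub_nonneg.2 (hetaM j)) (hy j), mul_nonneg (sub_nonneg.2 (hzetaM j)) (hy j)]
  have hzs : 0 ≤ ∑ i, z i := Finset.sum_nonneg fun i _ => hz' i
  have hys : 0 ≤ ∑ j, y j := Finset.sum_nonneg fun j _ => hy j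
  have hzn : ‖z‖ ≤ ∑ i, z i := (pi_norm_le_iff_of_nonneg hzs).2 fun i => by
    rw [Real.norm_of_nonneg (hz' i)]
    exact Finset.single_le_sum (fun k _ => hz' k) (Finset.mem_univ i)
  have hyn : ‖y‖ ≤ ∑ j, y j := (pi_norm_le_iff_of_nonneg hys).2 fun i => by
    rw [Real.norm_of_nonneg (hy i)]
    exact Finset.single_le_sum (fun k _ => hy k) (Finset.mem_univ i)
  have hmax : max ‖z‖ ‖y‖ ≤ (∑ i, z i) + ∑ j, y j := max_le (by linarith) (by linarith)
  have hpos : 0 < φ - M := sub_pos.2 hφ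
  rw [le_div_iff₀ (by positivity)]
  have h5 := mul_le_mul_of_nonneg_right hmax hpos.le
  have h6 := mul_nonneg (add_nonneg hzs hys) hpos.le
  unfold qObj dObjEq
  rw [hcx]
  nlinarith
end

section
/- Suppose there exists a dual-feasible quadruple (x̂, π̂, η̂, ζ̂). Let sequences (x^k) ⊂ ℝ^n, (z^k) ⊂ ℝ^m, (y^k) ⊂ ℝ^p and a positive nondecreasing scalar sequence (φ_k) satisfy: (x^k, z^k, y^k) is feasible for (P̃_{φ_k}) for all k; f(x^k) + φ_k·(1ᵀz^k + 1ᵀy^k) ≤ f(x^{k−1}) + φ_k·(1ᵀz^{k−1} + 1ᵀy^{k−1}) for all k ≥ 1; and, if the sequence ((z^k, y^k)) is unbounded, then φ_k → ∞. Then the sequence ((z^k, y^k)) is bounded. (Lemma 4.4.) -/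
open Matrix Filter

/-- Lower bound on the objective by weak duality. -/
theorem qObj_lower_aux
    {n m p : ℕ} (H : Matrix (Fin n) (Fin n) ℝ) (hH : H.PosSemidef)
    (c : Fin n → ℝ) (A : Matrix (Fin m) (Fin n) ℝ) (C : Matrix (Fin p) (Fin n) ℝ)
    (xhat : Fin n → ℝ) (pihat : Fin m → ℝ) (etahat zetahat : Fin p → ℝ)
    (hdeq : H.mulVec xhat + c - Aᵀ.mulVec pihat
      - Cᵀ.mulVec (etahat - zetahat) = 0) (x : Fin n → ℝ) :
    -(1 / 2) * (xhat ⬝ᵥ H.mulVec xhat) + pihat ⬝ᵥ A.mulVec x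
      + etahat ⬝ᵥ C.mulVec x - zetahat ⬝ᵥ C.mulVec x ≤ qObj H c x := by
  have h1 := hH.dotProduct_mulVec_nonneg (x - xhat)
  have hs : xhat ⬝ᵥ H.mulVec x = x ⬝ᵥ H.mulVec xhat := by
    have hT : Hᵀ = H := by simpa using hH.isHermitian.eq
    rw [dotProduct_mulVec, ← mulVec_transpose, hT, dotProduct_comm]
  simp only [star_trivial, mulVec_sub, sub_dotProduct, dotProduct_sub, hs] at h1
  have h2 := congrArg (fun v => x ⬝ᵥ v) hdeq
  simp only [dotProduct_sub, dotProduct_add, mulVec_sub, dotProduct_zero] at h2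
  have e1 : x ⬝ᵥ Aᵀ.mulVec pihat = pihat ⬝ᵥ A.mulVec x := by
    rw [mulVec_transpose, dotProduct_comm, dotProduct_mulVec]
  have e2 : ∀ e : Fin p → ℝ, x ⬝ᵥ Cᵀ.mulVec e = e ⬝ᵥ C.mulVec x := by
    intro e
    rw [mulVec_transpose, dotProduct_comm, dotProduct_mulVec]
  rw [e1, e2, e2, dotProduct_comm x c] at h2
  unfold qObj
  linarith

theorem dot_le_aux {q : ℕ} (u v : Fin q → ℝ) (L : ℝ) (hu : ∀ i, u i ≤ L) (hv : 0 ≤ v) :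
    u ⬝ᵥ v ≤ L * ∑ i, v i := by
  rw [Finset.mul_sum]
  exact Finset.sum_le_sum fun i _ => mul_le_mul_of_nonneg_right (hu i) (hv i)

theorem norm_le_sum_aux {q : ℕ} (v : Fin q → ℝ) (hv : 0 ≤ v) : ‖v‖ ≤ ∑ i, v i := by
  rw [pi_norm_le_iff_of_nonneg (Finset.sum_nonneg fun i _ => hv i)]
  intro i
  rw [Real.norm_of_nonneg (hv i)]
  exact Finset.single_le_sum (f := v) (fun j _ => hv j) (Finset.mem_univ i)

/-- Lemma 4.4: the sequence ((z^k, y^k)) is bounded. -/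
theorem relaxation_sequence_bounded_with_equalities
    {n m p : ℕ} (H : Matrix (Fin n) (Fin n) ℝ) (hH : H.PosSemidef)
    (c : Fin n → ℝ) (A : Matrix (Fin m) (Fin n) ℝ) (b : Fin m → ℝ)
    (C : Matrix (Fin p) (Fin n) ℝ) (d : Fin p → ℝ)
    (xhat : Fin n → ℝ) (pihat : Fin m → ℝ) (etahat zetahat : Fin p → ℝ)
    (hdeq : H.mulVec xhat + c - Aᵀ.mulVec pihat
      - Cᵀ.mulVec (etahat - zetahat) = 0)
    (hpi : 0 ≤ pihat) (heta : 0 ≤ etahat) (hzeta : 0 ≤ zetahat)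
    (x : ℕ → Fin n → ℝ) (z : ℕ → Fin m → ℝ) (y : ℕ → Fin p → ℝ) (φ : ℕ → ℝ)
    (hφpos : ∀ k, 0 < φ k) (hφmono : Monotone φ)
    (hfeas1 : ∀ k, b ≤ A.mulVec (x k) + z k) (hz : ∀ k, 0 ≤ z k)
    (hfeas2 : ∀ k, d ≤ C.mulVec (x k) + y k)
    (hfeas3 : ∀ k, -d ≤ -C.mulVec (x k) + y k)
    (hdesc : ∀ k : ℕ,
      qObj H c (x (k + 1)) + φ (k + 1) * ((∑ i, z (k + 1) i) + ∑ j, y (k + 1) j) ≤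
      qObj H c (x k) + φ (k + 1) * ((∑ i, z k i) + ∑ j, y k j))
    (hunb : (¬ ∃ M : ℝ, ∀ k, max ‖z k‖ ‖y k‖ ≤ M) → Tendsto φ atTop atTop) :
    ∃ M : ℝ, ∀ k, max ‖z k‖ ‖y k‖ ≤ M := by
  by_contra hcon
  have hlim := hunb hcon
  apply hcon
  have hy : ∀ k, 0 ≤ y k := by
    intro k j
    have h2 := hfeas2 k j
    have h3 := hfeas3 k j
    simp only [Pi.add_apply, Pi.neg_apply, Pi.zero_apply] at h2 h3 ⊢
    linarith
  set s : ℕ → ℝ := fun k => (∑ i, z k i) + ∑ j, y k j with hs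
  have hs0 : ∀ k, 0 ≤ s k := fun k =>
    add_nonneg (Finset.sum_nonneg fun i _ => hz k i) (Finset.sum_nonneg fun i _ => hy k i)
  have hzs : ∀ k, 0 ≤ ∑ i, z k i := fun k => Finset.sum_nonneg fun i _ => hz k i
  have hys : ∀ k, 0 ≤ ∑ i, y k i := fun k => Finset.sum_nonneg fun i _ => hy k i
  obtain ⟨L, hL1, hL2⟩ : ∃ L : ℝ, (∀ i, pihat i ≤ L) ∧ (∀ j, (etahat + zetahat) j ≤ L) := by
    refine ⟨(∑ i, pihat i) + ∑ j, (etahat + zetahat) j, fun i => ?_, fun j => ?_⟩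
    · have h1 := Finset.single_le_sum (f := pihat) (fun j _ => hpi j) (Finset.mem_univ i)
      have h2 : 0 ≤ ∑ j, (etahat + zetahat) j :=
        Finset.sum_nonneg fun j _ => add_nonneg (heta j) (hzeta j)
      linarith
    · have h1 := Finset.single_le_sum (f := etahat + zetahat)
        (fun j _ => add_nonneg (heta j) (hzeta j)) (Finset.mem_univ j)
      have h2 : 0 ≤ ∑ j, pihat j := Finset.sum_nonneg fun j _ => hpi j
      linarith
  obtain ⟨K, hK⟩ : ∃ K : ℝ, ∀ k, K - L * s k ≤ qObj H c (x k) := by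
    refine ⟨-(1 / 2) * (xhat ⬝ᵥ H.mulVec xhat) + pihat ⬝ᵥ b + etahat ⬝ᵥ d - zetahat ⬝ᵥ d,
      fun k => ?_⟩
    have h0 := qObj_lower_aux H hH c A C xhat pihat etahat zetahat hdeq (x k)
    have h1 := dotProduct_le_dotProduct_of_nonneg_left (hfeas1 k) hpi
    have h2 := dotProduct_le_dotProduct_of_nonneg_left (hfeas2 k) heta
    have h3 := dotProduct_le_dotProduct_of_nonneg_left (hfeas3 k) hzeta
    simp only [dotProduct_add, dotProduct_neg] at h1 h2 h3
    have h4 := dot_le_aux _ _ L hL1 (hz k)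
    have h5 := dot_le_aux _ _ L hL2 (hy k)
    rw [add_dotProduct] at h5
    simp only [hs]
    linarith
  obtain ⟨N, hN⟩ := (hlim.eventually_ge_atTop (L + 1)).exists
  set g : ℕ → ℝ := fun k => qObj H c (x k) - K + L * s k with hg
  have hg0 : ∀ k, 0 ≤ g k := fun k => by
    have := hK k
    simp only [hg]
    linarith
  have hw : ∀ k, N ≤ k → 0 < φ k - L := fun k hk => by
    have := hφmono hk
    linarith
  have hmain : ∀ k, N ≤ k → s k + g k / (φ k - L) ≤ s N + g N / (φ N - L) := by
    intro k hk
    induction k, hk using Nat.le_induction with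
    | base => exact le_rfl
    | succ k hk ih =>
      refine le_trans ?_ ih
      have hw1 := hw (k + 1) (by omega)
      have hstep : s (k + 1) + g (k + 1) / (φ (k + 1) - L) ≤ s k + g k / (φ (k + 1) - L) := by
        have e : ∀ i, s i + g i / (φ (k + 1) - L)
            = ((φ (k + 1) - L) * s i + g i) / (φ (k + 1) - L) := fun i => by
          field_simp
        rw [e, e]
        refine div_le_div_of_nonneg_right ?_ hw1.le
        have := hdesc k
        simp only [hg, hs] at *
        linarith
      refine hstep.trans ?_
      have hm := hφmono (Nat.le_succ k)
      have := div_le_div_of_nonneg_left (hg0 k) (hw k hk) (sub_le_sub_right hm L)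
      exact add_le_add le_rfl this
  have hS0 : 0 ≤ ∑ i ∈ Finset.range N, s i := Finset.sum_nonneg fun i _ => hs0 i
  have hT0 : 0 ≤ s N + g N / (φ N - L) :=
    add_nonneg (hs0 N) (div_nonneg (hg0 N) (hw N le_rfl).le)
  refine ⟨(∑ i ∈ Finset.range N, s i) + (s N + g N / (φ N - L)), fun k => ?_⟩
  have hk1 : max ‖z k‖ ‖y k‖ ≤ s k := by
    have a1 := norm_le_sum_aux _ (hz k)
    have a2 := norm_le_sum_aux _ (hy k)
    have a3 := hzs k
    have a4 := hys k
    refine max_le ?_ ?_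
    · simp only [hs]; linarith
    · simp only [hs]; linarith
  refine hk1.trans ?_
  rcases lt_or_ge k N with h | h
  · have := Finset.single_le_sum (f := s) (fun j _ => hs0 j) (Finset.mem_range.mpr h)
    linarith
  · have h1 := hmain k h
    have h2 := div_nonneg (hg0 k) (hw k h).le
    linarith
end

section
/- Let sequences (x^k) ⊂ ℝ^n, (z^k), (π^k), (ξ^k) ⊂ ℝ^m, (y^k), (η^k), (ζ^k) ⊂ ℝ^p and scalars φ_k > 0 satisfy, for all k: z^k ≥ 0, s^k := Ax^k + z^k − b ≥ 0, π^k, ξ^k, η^k, ζ^k ≥ 0, and φ_k → ∞. Suppose K ⊆ ℕ is an infinite index set such that for k ∈ K the sequences (s^k ∘ π^k), (Hx^k + c − Aᵀπ^k − Cᵀ(η^k − ζ^k)), (π^k + ξ^k − φ_k·1), (η^k + ζ^k − φ_k·1), and (φ_k / max{1, ‖(π^k, η^k − ζ^k)‖∞}) are bounded, z^k → 0 and y^k → 0 along K, and (x^k)_{k∈K} is bounded. Then for every limit point x* of (x^k)_{k∈K} there exist π̄ ∈ ℝ^m and ω̄ ∈ ℝ^p with π̄ ≥ 0, (π̄, ω̄)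 ≠ (0, 0), Aᵀπ̄ + Cᵀω̄ = 0, and π̄ᵢ·(Ax* − b)ᵢ = 0 for every i. (Lemma 4.6.) -/
open Matrix Filter

/-- Lemma 4.6: existence of a nonzero multiplier pair (π̄, ω̄)
with Aᵀπ̄ + Cᵀω̄ = 0 complementary to the active inequality constraints at any
limit point. -/
theorem limit_point_degenerate_multiplier_with_equalities
    {n m p : ℕ} (H : Matrix (Fin n) (Fin n) ℝ) (hH : H.PosSemidef)
    (c : Fin n → ℝ) (A : Matrix (Fin m) (Fin n) ℝ) (b : Fin m → ℝ)
    (C : Matrix (Fin p) (Fin n) ℝ) (d : Fin p → ℝ)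
    (x : ℕ → Fin n → ℝ) (z π ξ : ℕ → Fin m → ℝ) (y η ζ : ℕ → Fin p → ℝ)
    (φ : ℕ → ℝ) (hφpos : ∀ k, 0 < φ k)
    (hz : ∀ k, 0 ≤ z k) (hs : ∀ k, 0 ≤ A.mulVec (x k) + z k - b)
    (hπ : ∀ k, 0 ≤ π k) (hξ : ∀ k, 0 ≤ ξ k)
    (hη : ∀ k, 0 ≤ η k) (hζ : ∀ k, 0 ≤ ζ k)
    (hφ : Tendsto φ atTop atTop)
    (K : Set ℕ) (hK : K.Infinite)
    (hbd1 : ∃ M : ℝ, ∀ k ∈ K, ‖(A.mulVec (x k) + z k - b) * π k‖ ≤ M)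
    (hbd2 : ∃ M : ℝ, ∀ k ∈ K, ‖H.mulVec (x k) + c - Aᵀ.mulVec (π k)
      - Cᵀ.mulVec (η k - ζ k)‖ ≤ M)
    (hbd3 : ∃ M : ℝ, ∀ k ∈ K, ‖π k + ξ k - fun _ => φ k‖ ≤ M)
    (hbd4 : ∃ M : ℝ, ∀ k ∈ K, ‖η k + ζ k - fun _ => φ k‖ ≤ M)
    (hbd5 : ∃ M : ℝ, ∀ k ∈ K, φ k / max 1 (max ‖π k‖ ‖η k - ζ k‖) ≤ M)
    (hz0 : Tendsto (fun k => z k) (atTop ⊓ Filter.principal K) (nhds 0))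
    (hy0 : Tendsto (fun k => y k) (atTop ⊓ Filter.principal K) (nhds 0))
    (hxbd : ∃ M : ℝ, ∀ k ∈ K, ‖x k‖ ≤ M) :
    ∀ xstar : Fin n → ℝ,
      (∃ σ : ℕ → ℕ, StrictMono σ ∧ (∀ j, σ j ∈ K) ∧
        Tendsto (fun j => x (σ j)) atTop (nhds xstar)) →
      ∃ (pibar : Fin m → ℝ) (omegabar : Fin p → ℝ),
        0 ≤ pibar ∧ (pibar, omegabar) ≠ (0, 0) ∧
        Aᵀ.mulVec pibar + Cᵀ.mulVec omegabar = 0 ∧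
        ∀ i, pibar i * (A.mulVec xstar - b) i = 0 := by
  rintro xs ⟨σ, hσ, hσK, hx⟩
  obtain ⟨M1, hM1⟩ := hbd1
  obtain ⟨M2, hM2⟩ := hbd2
  obtain ⟨M5, hM5⟩ := hbd5
  have hσt : Tendsto σ atTop atTop := hσ.tendsto_atTop
  set N : ℕ → ℝ := fun k => max 1 (max ‖π k‖ ‖η k - ζ k‖) with hN
  have hN1 : ∀ k, 1 ≤ N k := fun k => le_max_left _ _
  have hN0 : ∀ k, 0 < N k := fun k => lt_of_lt_of_le one_pos (hN1 k)
  have hNσ : Tendsto (fun j => N (σ j)) atTop atTop := by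
    have h1 : Tendsto (fun j => φ (σ j) / max M5 1) atTop atTop :=
      (hφ.comp hσt).atTop_div_const (lt_of_lt_of_le one_pos (le_max_right _ _))
    refine tendsto_atTop_mono (fun j => ?_) h1
    have h2 := hM5 (σ j) (hσK j)
    change φ (σ j) / N (σ j) ≤ M5 at h2
    rw [div_le_iff₀ (hN0 _)] at h2
    rw [div_le_iff₀ (lt_of_lt_of_le one_pos (le_max_right _ _)), mul_comm]
    exact h2.trans (mul_le_mul_of_nonneg_right (le_max_left _ _) (hN0 _).le)
  let v : ℕ → (Fin m → ℝ) × (Fin p → ℝ) := fun k => (N k)⁻¹ • (π k, η k - ζ k)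
  have hvn : ∀ k, ‖v k‖ = (N k)⁻¹ * max ‖π k‖ ‖η k - ζ k‖ := by
    intro k
    simp only [v]
    rw [norm_smul, Real.norm_of_nonneg (inv_nonneg.2 (hN0 k).le)]
    rfl
  have hvb : ∀ j, v (σ j) ∈ Metric.closedBall (0 : (Fin m → ℝ) × (Fin p → ℝ)) 1 := by
    intro j
    rw [mem_closedBall_zero_iff, hvn, inv_mul_le_iff₀ (hN0 _), mul_one]
    exact le_max_right _ _
  obtain ⟨w, -, ψ, hψ, hw⟩ := (isCompact_closedBall _ _).tendsto_subseq hvb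
  have hψt : Tendsto ψ atTop atTop := hψ.tendsto_atTop
  let τ : ℕ → ℕ := fun j => σ (ψ j)
  have hτK : ∀ j, τ j ∈ K := fun j => hσK _
  have hτt : Tendsto τ atTop atTop := hσt.comp hψt
  have hNτ : Tendsto (fun j => N (τ j)) atTop atTop := hNσ.comp hψt
  have hNi : Tendsto (fun j => (N (τ j))⁻¹) atTop (nhds 0) := hNτ.inv_tendsto_atTop
  have hxτ : Tendsto (fun j => x (τ j)) atTop (nhds xs) := hx.comp hψt
  have hzτ : Tendsto (fun j => z (τ j)) atTop (nhds 0) :=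
    hz0.comp (tendsto_inf.2 ⟨hτt, tendsto_principal.2 (Eventually.of_forall hτK)⟩)
  have hwτ : Tendsto (fun j => v (τ j)) atTop (nhds w) := hw
  have hw1 : Tendsto (fun j => (N (τ j))⁻¹ • π (τ j)) atTop (nhds w.1) :=
    (continuous_fst.tendsto w).comp hwτ
  have hw2 : Tendsto (fun j => (N (τ j))⁻¹ • (η (τ j) - ζ (τ j))) atTop (nhds w.2) :=
    (continuous_snd.tendsto w).comp hwτ
  refine ⟨w.1, w.2, ?_, ?_, ?_, ?_⟩
  · exact ge_of_tendsto' hw1 fun j => smul_nonneg (inv_nonneg.2 (hN0 _).le) (hπ _)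
  · intro h
    have hw0 : w = 0 := h
    have h1 : Tendsto (fun j => ‖v (τ j)‖) atTop (nhds ‖w‖) := hwτ.norm
    have h2 : Tendsto (fun j => ‖v (τ j)‖) atTop (nhds 1) := by
      refine tendsto_const_nhds.congr' ?_
      filter_upwards [hNτ.eventually_gt_atTop 1] with j hj
      rw [hvn]
      have h3 : N (τ j) = max ‖π (τ j)‖ ‖η (τ j) - ζ (τ j)‖ := by
        rcases max_choice 1 (max ‖π (τ j)‖ ‖η (τ j) - ζ (τ j)‖) with h | h
        · exact absurd h hj.ne'
        · exact h
      rw [← h3, inv_mul_cancel₀ (hN0 _).ne']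
    have h3 := tendsto_nhds_unique h1 h2
    rw [hw0, norm_zero] at h3
    exact zero_ne_one h3
  · have cA : Continuous fun u : Fin m → ℝ => Aᵀ.mulVec u := by fun_prop
    have cC : Continuous fun u : Fin p → ℝ => Cᵀ.mulVec u := by fun_prop
    have cH : Continuous fun u : Fin n → ℝ => H.mulVec u + c := by fun_prop
    have h1 := ((cA.tendsto _).comp hw1).add ((cC.tendsto _).comp hw2)
    have h2 : Tendsto (fun j => (N (τ j))⁻¹ • (H.mulVec (x (τ j)) + c)) atTop (nhds 0) := by
      simpa using hNi.smul ((cH.tendsto _).comp hxτ)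
    have h3 : Tendsto (fun j => (N (τ j))⁻¹ • (H.mulVec (x (τ j)) + c - Aᵀ.mulVec (π (τ j))
      - Cᵀ.mulVec (η (τ j) - ζ (τ j)))) atTop (nhds 0) := by
      refine squeeze_zero_norm (a := fun j => (N (τ j))⁻¹ * M2) (fun j => ?_)
        (by simpa using hNi.mul_const M2)
      rw [norm_smul, Real.norm_of_nonneg (inv_nonneg.2 (hN0 _).le)]
      exact mul_le_mul_of_nonneg_left (hM2 _ (hτK j)) (inv_nonneg.2 (hN0 _).le)
    have h4 := h2.sub h3
    rw [sub_zero] at h4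
    refine tendsto_nhds_unique h1 (h4.congr fun j => ?_)
    simp only [Function.comp, Matrix.mulVec_smul]
    simp only [smul_sub]
    abel
  · intro i
    have cA : Continuous fun u : Fin n → ℝ => A.mulVec u := by fun_prop
    have h1 : Tendsto (fun j => A.mulVec (x (τ j)) + z (τ j) - b) atTop
        (nhds (A.mulVec xs + 0 - b)) :=
      (((cA.tendsto _).comp hxτ).add hzτ).sub tendsto_const_nhds
    rw [add_zero] at h1
    have h2 := hw1.mul h1
    have h3 : Tendsto (fun j => (N (τ j))⁻¹ • ((A.mulVec (x (τ j)) + z (τ j) - b) * π (τ j)))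
        atTop (nhds 0) := by
      refine squeeze_zero_norm (a := fun j => (N (τ j))⁻¹ * M1) (fun j => ?_)
        (by simpa using hNi.mul_const M1)
      rw [norm_smul, Real.norm_of_nonneg (inv_nonneg.2 (hN0 _).le)]
      exact mul_le_mul_of_nonneg_left (hM1 _ (hτK j)) (inv_nonneg.2 (hN0 _).le)
    have h4 := tendsto_nhds_unique h2 (h3.congr fun j => by rw [smul_mul_assoc, mul_comm (π _)])
    exact congrFun h4 i
end

section
/- Suppose C has full row rank (rank p), and suppose there exists x̂ ∈ ℝ^n with Ax̂ > b (strict inequality in every component) and Cx̂ = d. Let x* ∈ ℝ^n satisfy Ax* ≥ b and Cx* = d, and let π ∈ ℝ^m and ω ∈ ℝ^p satisfy π ≥ 0, Aᵀπ + Cᵀω = 0, and πᵢ·(Ax* − b)ᵢ = 0 for every i. Then π = 0 and ω = 0. (Core contradiction argument in the proof of Theorem 4.7.) -/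
open Matrix Filter

/-- core contradiction argument in the proof of Theorem 4.7:
with C of full row rank and a Slater point, the multipliers vanish. -/
theorem multipliers_vanish_with_equalities
    {n m p : ℕ} (A : Matrix (Fin m) (Fin n) ℝ) (b : Fin m → ℝ)
    (C : Matrix (Fin p) (Fin n) ℝ) (d : Fin p → ℝ)
    (hrank : C.rank = p)
    (xhat : Fin n → ℝ) (hslater : ∀ i, b i < A.mulVec xhat i)
    (heqhat : C.mulVec xhat = d)
    (xstar : Fin n → ℝ) (hfeas : b ≤ A.mulVec xstar)
    (heqstar : C.mulVec xstar = d)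
    (π : Fin m → ℝ) (ω : Fin p → ℝ) (hπ : 0 ≤ π)
    (hstat : Aᵀ.mulVec π + Cᵀ.mulVec ω = 0)
    (hcomp : ∀ i, π i * (A.mulVec xstar - b) i = 0) :
    π = 0 ∧ ω = 0 := by
  have hC : Function.Injective C.vecMul := by
    rw [Matrix.vecMul_injective_iff, linearIndependent_iff_card_eq_finrank_span, Fintype.card_fin,
      Set.finrank, ← Matrix.rank_eq_finrank_span_row, hrank]
  rw [Matrix.mulVec_transpose, Matrix.mulVec_transpose] at hstat
  have h0 : ∀ x, C.mulVec x = d → π ⬝ᵥ A.mulVec x = - (ω ⬝ᵥ d) := by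
    intro x hx
    have h := congrArg (fun v => v ⬝ᵥ x) hstat
    simp only [add_dotProduct, zero_dotProduct, ← Matrix.dotProduct_mulVec, hx] at h
    linarith
  have h1 : π ⬝ᵥ (A.mulVec xstar - b) = 0 :=
    Finset.sum_eq_zero fun i _ => hcomp i
  have h2 : ∑ i, π i * (A.mulVec xhat - b) i = 0 := by
    change π ⬝ᵥ (A.mulVec xhat - b) = 0
    rw [dotProduct_sub, h0 _ heqstar] at h1
    rw [dotProduct_sub, h0 _ heqhat, h1]
  have hpos : ∀ i, 0 < (A.mulVec xhat - b) i := fun i => sub_pos.2 (hslater i)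
  rw [Finset.sum_eq_zero_iff_of_nonneg fun i _ => mul_nonneg (hπ i) (hpos i).le] at h2
  have hp : π = 0 := by
    funext i
    exact (mul_eq_zero.1 (h2 i (Finset.mem_univ i))).resolve_right (hpos i).ne'
  refine ⟨hp, hC ?_⟩
  simpa [hp] using hstat
end

section
/- Let φ̂ > 0. Suppose sequences (x^k) ⊂ ℝ^n, (z^k), (π^k), (ξ^k) ⊂ ℝ^m, (y^k), (η^k), (ζ^k) ⊂ ℝ^p satisfy, for all k: (x^k, z^k, y^k) is feasible for (P̃_φ̂), π^k, ξ^k, η^k, ζ^k ≥ 0, and the sequence ((x^k, z^k, y^k)) is bounded. Suppose further that, with s^k := Ax^k + z^k − b, t₊^k := Cx^k + y^k − d, and t₋^k := −Cx^k + y^k + d: s^k ∘ π^k → 0, z^k ∘ ξ^k → 0, t₊^k ∘ η^k → 0, t₋^k ∘ ζ^k → 0, Hx^k + c − Aᵀπ^k − Cᵀ(η^k − ζ^k) → 0, π^k + ξ^k − φ̂·1 → 0, η^k + ζ^k − φ̂·1 → 0, and limsup_k max{‖π^k‖∞, ‖η^k − ζ^k‖∞} < φ̂. Then (z^k, y^k)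 → (0, 0), and every limit point x* of (x^k) is an optimal solution of (P). (Core of Proposition 4.2.) -/
open Matrix Filter

/-- A nonnegative sequence whose product with an eventually uniformly positive sequence tends
to zero tends to zero. -/
theorem aux_tendsto_zero (u v : ℕ → ℝ) (δ : ℝ) (hδ : 0 < δ) (hu : ∀ k, 0 ≤ u k)
    (hv : ∀ᶠ k in atTop, δ ≤ v k) (huv : Tendsto (fun k => u k * v k) atTop (nhds 0)) :
    Tendsto u atTop (nhds 0) := by
  have h := huv.div_const δ
  rw [zero_div] at h
  refine tendsto_of_tendsto_of_tendsto_of_le_of_le' tendsto_const_nhds h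
    (Eventually.of_forall hu) ?_
  filter_upwards [hv] with k hk
  rw [le_div_iff₀ hδ]
  exact mul_le_mul_of_nonneg_left hk (hu k)

/-- First-order lower bound for the convex quadratic objective. -/
theorem aux_grad {n : ℕ} (H : Matrix (Fin n) (Fin n) ℝ) (hH : H.PosSemidef)
    (c x w : Fin n → ℝ) :
    qObj H c x + (H.mulVec x + c) ⬝ᵥ (w - x) ≤ qObj H c w := by
  have h1 : 0 ≤ (w - x) ⬝ᵥ H.mulVec (w - x) := by
    simpa using hH.dotProduct_mulVec_nonneg (w - x)
  have hT : Hᵀ = H := by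
    have := hH.isHermitian.eq
    rwa [conjTranspose_eq_transpose_of_trivial] at this
  have h2 : w ⬝ᵥ H.mulVec x = x ⬝ᵥ H.mulVec w := by
    rw [dotProduct_mulVec, ← mulVec_transpose, hT, dotProduct_comm]
  simp only [qObj, mulVec_sub, dotProduct_sub, sub_dotProduct, add_dotProduct] at *
  rw [dotProduct_comm (H.mulVec x) w, dotProduct_comm (H.mulVec x) x]
  linarith

/-- core of Proposition 4.2: (z^k, y^k) → (0,0) and every limit
point of (x^k) is an optimal solution of (P), with equality constraints. -/
theorem convergence_for_constant_penalty_with_equalities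
    {n m p : ℕ} (H : Matrix (Fin n) (Fin n) ℝ) (hH : H.PosSemidef)
    (c : Fin n → ℝ) (A : Matrix (Fin m) (Fin n) ℝ) (b : Fin m → ℝ)
    (C : Matrix (Fin p) (Fin n) ℝ) (d : Fin p → ℝ)
    (φhat : ℝ) (hφhat : 0 < φhat)
    (x : ℕ → Fin n → ℝ) (z π ξ : ℕ → Fin m → ℝ) (y η ζ : ℕ → Fin p → ℝ)
    (hfeas1 : ∀ k, b ≤ A.mulVec (x k) + z k) (hz : ∀ k, 0 ≤ z k)
    (hfeas2 : ∀ k, d ≤ C.mulVec (x k) + y k)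
    (hfeas3 : ∀ k, -d ≤ -C.mulVec (x k) + y k)
    (hπ : ∀ k, 0 ≤ π k) (hξ : ∀ k, 0 ≤ ξ k)
    (hη : ∀ k, 0 ≤ η k) (hζ : ∀ k, 0 ≤ ζ k)
    (hbd : ∃ M : ℝ, ∀ k, ‖x k‖ ≤ M ∧ ‖z k‖ ≤ M ∧ ‖y k‖ ≤ M)
    (hcomp1 : Tendsto (fun k => (A.mulVec (x k) + z k - b) * π k) atTop (nhds 0))
    (hcomp2 : Tendsto (fun k => z k * ξ k) atTop (nhds 0))
    (hcomp3 : Tendsto (fun k => (C.mulVec (x k) + y k - d) * η k) atTop (nhds 0))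
    (hcomp4 : Tendsto (fun k => (-C.mulVec (x k) + y k + d) * ζ k) atTop (nhds 0))
    (hstat : Tendsto (fun k => H.mulVec (x k) + c - Aᵀ.mulVec (π k)
      - Cᵀ.mulVec (η k - ζ k)) atTop (nhds 0))
    (hsum1 : Tendsto (fun k => π k + ξ k - fun _ => φhat) atTop (nhds 0))
    (hsum2 : Tendsto (fun k => η k + ζ k - fun _ => φhat) atTop (nhds 0))
    (hlimsup : ∃ r : ℝ, r < φhat ∧
      ∀ᶠ k in atTop, max ‖π k‖ ‖η k - ζ k‖ ≤ r) :
    Tendsto (fun k => z k) atTop (nhds 0) ∧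
    Tendsto (fun k => y k) atTop (nhds 0) ∧
    ∀ xstar : Fin n → ℝ,
      (∃ σ : ℕ → ℕ, StrictMono σ ∧ Tendsto (fun j => x (σ j)) atTop (nhds xstar)) →
      b ≤ A.mulVec xstar ∧ C.mulVec xstar = d ∧
        ∀ x' : Fin n → ℝ, b ≤ A.mulVec x' → C.mulVec x' = d →
          qObj H c xstar ≤ qObj H c x' := by
  obtain ⟨r, hr, hlim⟩ := hlimsup
  have hδ : 0 < (φhat - r) / 4 := by linarith
  have hzt : Tendsto (fun k => z k) atTop (nhds 0) := by
    rw [tendsto_pi_nhds] at *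
    intro i
    refine aux_tendsto_zero _ (fun k => ξ k i) _ hδ (fun k => hz k i) ?_ (hcomp2 i)
    filter_upwards [hlim, (hsum1 i).eventually (lt_mem_nhds (neg_lt_zero.2 hδ))] with k hk hs
    have h1 := (norm_le_pi_norm (π k) i).trans ((le_max_left _ _).trans hk)
    have h2 := (le_abs_self _).trans h1
    simp only [Pi.add_apply, Pi.sub_apply, Pi.zero_apply] at hs
    linarith
  have hηζ : ∀ i, ∀ᶠ k in atTop, (φhat - r) / 4 ≤ η k i ∧ (φhat - r) / 4 ≤ ζ k i := by
    intro i
    rw [tendsto_pi_nhds] at hsum2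
    filter_upwards [hlim, (hsum2 i).eventually (lt_mem_nhds (neg_lt_zero.2 hδ))] with k hk hs
    have h1 := (norm_le_pi_norm (η k - ζ k) i).trans ((le_max_right _ _).trans hk)
    rw [Real.norm_eq_abs, abs_le] at h1
    simp only [Pi.add_apply, Pi.sub_apply] at hs h1
    constructor <;> linarith
  have htp : ∀ i, Tendsto (fun k => (C.mulVec (x k) + y k - d) i) atTop (nhds 0) := fun i =>
    aux_tendsto_zero _ (fun k => η k i) _ hδ
      (fun k => sub_nonneg.2 (hfeas2 k i)) ((hηζ i).mono fun k h => h.1)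
      (tendsto_pi_nhds.1 hcomp3 i)
  have htm : ∀ i, Tendsto (fun k => (-C.mulVec (x k) + y k + d) i) atTop (nhds 0) := fun i =>
    aux_tendsto_zero _ (fun k => ζ k i) _ hδ
      (fun k => by
        have := hfeas3 k i
        simp only [Pi.add_apply, Pi.neg_apply, Pi.zero_apply] at *
        linarith) ((hηζ i).mono fun k h => h.2)
      (tendsto_pi_nhds.1 hcomp4 i)
  have hyt : Tendsto (fun k => y k) atTop (nhds 0) := by
    rw [tendsto_pi_nhds]
    intro i
    have h := ((htp i).add (htm i)).div_const 2
    simp only [add_zero, zero_div] at h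
    refine h.congr fun k => ?_
    simp only [Pi.add_apply, Pi.neg_apply, Pi.sub_apply]
    ring
  refine ⟨hzt, hyt, ?_⟩
  rintro xs ⟨σ, hσ, hx⟩
  have hσt := hσ.tendsto_atTop
  have hAx : Tendsto (fun j => A.mulVec (x (σ j))) atTop (nhds (A.mulVec xs)) :=
    ((Continuous.matrix_mulVec continuous_const continuous_id).tendsto xs).comp hx
  have hCx : Tendsto (fun j => C.mulVec (x (σ j))) atTop (nhds (C.mulVec xs)) :=
    ((Continuous.matrix_mulVec continuous_const continuous_id).tendsto xs).comp hx
  refine ⟨?_, ?_, ?_⟩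
  · have h := hAx.add (hzt.comp hσt)
    rw [add_zero] at h
    exact ge_of_tendsto' h fun j => hfeas1 (σ j)
  · have h := ((hCx.add (hyt.comp hσt)).sub_const d)
    have h2 : Tendsto (fun k => C.mulVec (x k) + y k - d) atTop (nhds 0) :=
      tendsto_pi_nhds.2 htp
    have h3 := tendsto_nhds_unique h (h2.comp hσt)
    rw [add_zero] at h3
    exact sub_eq_zero.1 h3
  · intro w hw1 hw2
    have hq : Tendsto (fun j => qObj H c (x (σ j))) atTop (nhds (qObj H c xs)) := by
      have hc : Continuous (qObj H c) := by
        unfold qObj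
        fun_prop
      exact (hc.tendsto xs).comp hx
    have hdot : ∀ {l : ℕ} (u v : ℕ → Fin l → ℝ) (a e : Fin l → ℝ),
        Tendsto u atTop (nhds a) → Tendsto v atTop (nhds e) →
        Tendsto (fun j => u j ⬝ᵥ v j) atTop (nhds (a ⬝ᵥ e)) := by
      intro l u v a e hu hv
      exact tendsto_finsetSum _ fun i _ =>
        (tendsto_pi_nhds.1 hu i).mul (tendsto_pi_nhds.1 hv i)
    have L0 := hdot _ _ _ _ (hstat.comp hσt) (hx.const_sub w)
    have L1 := hdot _ _ _ _ (hcomp1.comp hσt) (tendsto_const_nhds (x := fun _ => (1:ℝ)))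
    have L3 := hdot _ _ _ _ (hcomp3.comp hσt) (tendsto_const_nhds (x := fun _ => (1:ℝ)))
    have L4 := hdot _ _ _ _ (hcomp4.comp hσt) (tendsto_const_nhds (x := fun _ => (1:ℝ)))
    have L := hq.add (((L0.sub L1).sub L3).sub L4)
    simp only [zero_dotProduct, sub_zero, add_zero] at L
    refine le_of_tendsto' L fun j => ?_
    refine le_trans ?_ (aux_grad H hH c (x (σ j)) w)
    simp only [Function.comp]
    generalize σ j = k
    have e1 : (Aᵀ.mulVec (π k)) ⬝ᵥ (w - x k) = π k ⬝ᵥ (A.mulVec w - A.mulVec (x k)) := by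
      rw [mulVec_transpose, ← dotProduct_mulVec, mulVec_sub]
    have e2 : (Cᵀ.mulVec (η k - ζ k)) ⬝ᵥ (w - x k)
        = (η k - ζ k) ⬝ᵥ (d - C.mulVec (x k)) := by
      rw [mulVec_transpose, ← dotProduct_mulVec, mulVec_sub, hw2]
    have i1 : 0 ≤ π k ⬝ᵥ (A.mulVec w - A.mulVec (x k))
        + ((A.mulVec (x k) + z k - b) * π k) ⬝ᵥ (fun _ => (1:ℝ)) := by
      simp only [dotProduct, ← Finset.sum_add_distrib]
      refine Finset.sum_nonneg fun i _ => ?_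
      have a1 := hw1 i
      have a2 := hz k i
      have a3 := hπ k i
      simp only [Pi.add_apply, Pi.sub_apply, Pi.mul_apply, Pi.zero_apply] at *
      nlinarith [mul_nonneg a3 a2, mul_nonneg a3 (sub_nonneg.2 a1)]
    have i2 : 0 ≤ (η k - ζ k) ⬝ᵥ (d - C.mulVec (x k))
        + ((C.mulVec (x k) + y k - d) * η k) ⬝ᵥ (fun _ => (1:ℝ))
        + ((-C.mulVec (x k) + y k + d) * ζ k) ⬝ᵥ (fun _ => (1:ℝ)) := by
      simp only [dotProduct, ← Finset.sum_add_distrib]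
      refine Finset.sum_nonneg fun i _ => ?_
      have a1 := hfeas2 k i
      have a2 := hfeas3 k i
      have a3 := hη k i
      have a4 := hζ k i
      simp only [Pi.add_apply, Pi.sub_apply, Pi.mul_apply, Pi.zero_apply, Pi.neg_apply] at *
      have a5 : 0 ≤ y k i := by linarith
      nlinarith [mul_nonneg a3 a5, mul_nonneg a4 a5]
    rw [sub_dotProduct, sub_dotProduct, e1, e2]
    linarith
end

section
/- Suppose the system Ax ≥ b, Cx = d has no solution x ∈ ℝ^n. Then the linear program: maximize bᵀπ + dᵀω over (π, ω) ∈ ℝ^m × ℝ^p subject to Aᵀπ + Cᵀω = 0, 0 ≤ π ≤ 1, and −1 ≤ ω ≤ 1, attains its maximum, and its optimal value is strictly positive; consequently every optimal solution (π*, ω*) satisfies π* ≥ 0, Aᵀπ* + Cᵀω* = 0, and bᵀπ* + dᵀω* > 0. (Lemma 5.3.) -/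
open Matrix Filter

lemma aux_mid {ι : Type} [Fintype ι] (a c : ι → ℝ)
    (h0 : ∀ i, a i = 0 → c i ≤ 0)
    (h1 : ∀ i k, 0 < a i → a k < 0 → a i * c k + (- a k) * c i ≤ 0) :
    ∃ t : ℝ, ∀ i, c i ≤ a i * t := by
  classical
  have key : ∀ i k, 0 < a i → a k < 0 → c i / a i ≤ c k / a k := by
    intro i k hi hk
    have := h1 i k hi hk
    rw [div_le_iff₀ hi, div_mul_eq_mul_div, le_div_iff_of_neg hk]
    linarith
  have main : ∃ t : ℝ, (∀ i, 0 < a i → c i / a i ≤ t) ∧ (∀ k, a k < 0 → t ≤ c k / a k) := by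
    by_cases hP : (Finset.univ.filter (fun i => 0 < a i)).Nonempty
    · obtain ⟨i, hi, hm⟩ := Finset.exists_max_image _ (fun i => c i / a i) hP
      simp only [Finset.mem_filter, Finset.mem_univ, true_and] at hi hm
      exact ⟨c i / a i, hm, fun k hk => key i k hi hk⟩
    · have hP' : ∀ i, ¬ 0 < a i := by
        intro i hi
        exact hP ⟨i, by simpa using hi⟩
      by_cases hN : (Finset.univ.filter (fun i => a i < 0)).Nonempty
      · obtain ⟨i, hi, hm⟩ := Finset.exists_min_image _ (fun i => c i / a i) hN
        simp only [Finset.mem_filter, Finset.mem_univ, true_and] at hi hm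
        exact ⟨c i / a i, fun k hk => absurd hk (hP' k), hm⟩
      · exact ⟨0, fun k hk => absurd hk (hP' k), fun k hk => absurd ⟨k, by simpa using hk⟩ hN⟩
  obtain ⟨t, ht1, ht2⟩ := main
  refine ⟨t, fun i => ?_⟩
  rcases lt_trichotomy (a i) 0 with h | h | h
  · have := ht2 i h
    rw [le_div_iff_of_neg h] at this
    linarith
  · rw [h]; simpa using h0 i h
  · have := ht1 i h
    rw [div_le_iff₀ h] at this
    linarith

lemma aux_farkas (n : ℕ) : ∀ (ι : Type) [Fintype ι] (A : ι → Fin n → ℝ) (b : ι → ℝ),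
    (¬ ∃ x : Fin n → ℝ, ∀ i, b i ≤ ∑ j, A i j * x j) →
    ∃ y : ι → ℝ, (∀ i, 0 ≤ y i) ∧ (∀ j, ∑ i, y i * A i j = 0) ∧ 0 < ∑ i, y i * b i := by
  classical
  induction n with
  | zero =>
    intro ι _ A b h
    have : ∃ i, 0 < b i := by
      by_contra! hc
      exact h ⟨0, fun i => by simpa using hc i⟩
    obtain ⟨i, hi⟩ := this
    refine ⟨fun k => if k = i then 1 else 0, fun k => ?_, fun j => j.elim0, by simpa using hi⟩
    dsimp only
    split_ifs <;> norm_num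
  | succ n ih =>
    intro ι _ A b h
    let a : ι → ℝ := fun i => A i 0
    let M : ι × ι → ι → ℝ := fun k i =>
      if a k.1 = 0 then (if i = k.1 then 1 else 0)
      else if 0 < a k.1 ∧ a k.2 < 0 then
        (if i = k.2 then a k.1 else 0) + (if i = k.1 then - a k.2 else 0)
      else 0
    have hM0 : ∀ k i, 0 ≤ M k i := by
      intro k i
      simp only [M]
      split_ifs <;> first | positivity | linarith
    have hMsum : ∀ k (f : ι → ℝ), ∑ i, M k i * f i =
        if a k.1 = 0 then f k.1 else if 0 < a k.1 ∧ a k.2 < 0 then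
          a k.1 * f k.2 + (- a k.2) * f k.1 else 0 := by
      intro k f
      simp only [M]
      split_ifs
      · simp
      · simp [add_mul, Finset.sum_add_distrib]
      · simp
    have hMa : ∀ k, ∑ i, M k i * a i = 0 := by
      intro k
      rw [hMsum]
      split_ifs with h1 h2
      · exact h1
      · ring
      · rfl
    obtain ⟨z, hz0, hzA, hzb⟩ := ih (ι × ι) (fun k j => ∑ i, M k i * A i j.succ)
      (fun k => ∑ i, M k i * b i) (by
        rintro ⟨x, hx⟩
        apply h
        let c : ι → ℝ := fun i => b i - ∑ j : Fin n, A i j.succ * x j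
        have hc : ∀ k, ∑ i, M k i * c i ≤ 0 := by
          intro k
          have := hx k
          have e : ∑ j, (∑ i, M k i * A i j.succ) * x j
              = ∑ i, M k i * ∑ j : Fin n, A i j.succ * x j := by
            simp only [Finset.sum_mul, Finset.mul_sum]
            rw [Finset.sum_comm]
            simp only [mul_assoc]
          simp only [c, mul_sub, Finset.sum_sub_distrib]
          linarith
        obtain ⟨t, ht⟩ := aux_mid a c
          (fun i hi => by
            have := hc (i, i)
            rw [hMsum] at this
            simpa [hi] using this)
          (fun i k hi hk => by
            have := hc (i, k)
            rw [hMsum, if_neg hi.ne', if_pos ⟨hi, hk⟩] at this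
            exact this)
        refine ⟨Fin.cons t x, fun i => ?_⟩
        have := ht i
        simp only [c, a] at this
        rw [Fin.sum_univ_succ]
        simp only [Fin.cons_zero, Fin.cons_succ]
        linarith)
    have hcomm : ∀ f : ι → ℝ, ∑ i, (∑ k, z k * M k i) * f i = ∑ k, z k * ∑ i, M k i * f i := by
      intro f
      simp only [Finset.sum_mul, Finset.mul_sum]
      rw [Finset.sum_comm]
      simp only [mul_assoc]
    refine ⟨fun i => ∑ k, z k * M k i,
      fun i => Finset.sum_nonneg fun k _ => mul_nonneg (hz0 k) (hM0 k i), ?_, ?_⟩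
    · intro j
      rw [hcomm]
      refine Fin.cases ?_ (fun j => ?_) j
      · exact Finset.sum_eq_zero fun k _ => by rw [hMa k, mul_zero]
      · exact hzA j
    · rw [hcomm]; exact hzb

lemma aux_cert {n m p : ℕ} (A : Matrix (Fin m) (Fin n) ℝ) (b : Fin m → ℝ)
    (C : Matrix (Fin p) (Fin n) ℝ) (d : Fin p → ℝ)
    (hinfeas : ¬ ∃ x : Fin n → ℝ, b ≤ A.mulVec x ∧ C.mulVec x = d) :
    ∃ (π : Fin m → ℝ) (ω : Fin p → ℝ), Aᵀ.mulVec π + Cᵀ.mulVec ω = 0 ∧ (∀ i, 0 ≤ π i) ∧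
      0 < b ⬝ᵥ π + d ⬝ᵥ ω := by
  obtain ⟨y, hy0, hyA, hyb⟩ := aux_farkas n (Fin m ⊕ (Fin p ⊕ Fin p))
    (Sum.elim (fun i => A i) (Sum.elim (fun i => C i) (fun i j => - C i j)))
    (Sum.elim b (Sum.elim d (fun i => - d i))) (by
      rintro ⟨x, hx⟩
      refine hinfeas ⟨x, fun i => hx (Sum.inl i), funext fun i => le_antisymm ?_ ?_⟩
      · have := hx (Sum.inr (Sum.inr i))
        simp only [Sum.elim_inr, neg_mul, Finset.sum_neg_distrib] at this
        exact neg_le_neg_iff.mp this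
      · exact hx (Sum.inr (Sum.inl i)))
  refine ⟨fun i => y (Sum.inl i), fun i => y (Sum.inr (Sum.inl i)) - y (Sum.inr (Sum.inr i)),
    ?_, fun i => hy0 _, ?_⟩
  · funext j
    have := hyA j
    simp only [Fintype.sum_sum_type, Sum.elim_inl, Sum.elim_inr, mul_neg,
      Finset.sum_neg_distrib] at this
    simp only [Pi.add_apply, Matrix.mulVec, dotProduct, Matrix.transpose_apply, mul_sub,
      Finset.sum_sub_distrib, Pi.zero_apply]
    simp only [mul_comm (A _ _), mul_comm (C _ _)]
    linarith
  · simp only [Fintype.sum_sum_type, Sum.elim_inl, Sum.elim_inr, mul_neg,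
      Finset.sum_neg_distrib] at hyb
    simp only [dotProduct, mul_sub, Finset.sum_sub_distrib]
    simp only [mul_comm (b _), mul_comm (d _)]
    linarith

/-- Lemma 5.3: if Ax ≥ b, Cx = d is infeasible, then the
Farkas-type linear program attains its maximum, its optimal value is strictly
positive, and consequently every optimal solution provides an infeasibility
certificate. -/
theorem infeasibility_certificate
    {n m p : ℕ} (A : Matrix (Fin m) (Fin n) ℝ) (b : Fin m → ℝ)
    (C : Matrix (Fin p) (Fin n) ℝ) (d : Fin p → ℝ)
    (hinfeas : ¬ ∃ x : Fin n → ℝ, b ≤ A.mulVec x ∧ C.mulVec x = d) :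
    (∃ (πs : Fin m → ℝ) (ωs : Fin p → ℝ),
      (Aᵀ.mulVec πs + Cᵀ.mulVec ωs = 0 ∧ (∀ i, 0 ≤ πs i ∧ πs i ≤ 1) ∧
        (∀ j, -1 ≤ ωs j ∧ ωs j ≤ 1)) ∧
      (∀ (π : Fin m → ℝ) (ω : Fin p → ℝ),
        Aᵀ.mulVec π + Cᵀ.mulVec ω = 0 → (∀ i, 0 ≤ π i ∧ π i ≤ 1) →
        (∀ j, -1 ≤ ω j ∧ ω j ≤ 1) →
        b ⬝ᵥ π + d ⬝ᵥ ω ≤ b ⬝ᵥ πs + d ⬝ᵥ ωs) ∧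
      0 < b ⬝ᵥ πs + d ⬝ᵥ ωs) ∧
    (∀ (πs : Fin m → ℝ) (ωs : Fin p → ℝ),
      (Aᵀ.mulVec πs + Cᵀ.mulVec ωs = 0 ∧ (∀ i, 0 ≤ πs i ∧ πs i ≤ 1) ∧
        (∀ j, -1 ≤ ωs j ∧ ωs j ≤ 1)) →
      (∀ (π : Fin m → ℝ) (ω : Fin p → ℝ),
        Aᵀ.mulVec π + Cᵀ.mulVec ω = 0 → (∀ i, 0 ≤ π i ∧ π i ≤ 1) →
        (∀ j, -1 ≤ ω j ∧ ω j ≤ 1) →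
        b ⬝ᵥ π + d ⬝ᵥ ω ≤ b ⬝ᵥ πs + d ⬝ᵥ ωs) →
      0 ≤ πs ∧ Aᵀ.mulVec πs + Cᵀ.mulVec ωs = 0 ∧ 0 < b ⬝ᵥ πs + d ⬝ᵥ ωs) := by
  obtain ⟨π₀, ω₀, h1, h2, h3⟩ := aux_cert A b C d hinfeas
  -- scaled certificate
  obtain ⟨π₁, ω₁, g1, g2, g3, g4⟩ : ∃ (π : Fin m → ℝ) (ω : Fin p → ℝ),
      Aᵀ.mulVec π + Cᵀ.mulVec ω = 0 ∧ (∀ i, 0 ≤ π i ∧ π i ≤ 1) ∧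
      (∀ j, -1 ≤ ω j ∧ ω j ≤ 1) ∧ 0 < b ⬝ᵥ π + d ⬝ᵥ ω := by
    let s : ℝ := 1 + ‖π₀‖ + ‖ω₀‖
    have hs : 0 < s := by positivity
    have hi : 0 < s⁻¹ := inv_pos.mpr hs
    have bd : ∀ r : ℝ, |r| ≤ s → -1 ≤ s⁻¹ * r ∧ s⁻¹ * r ≤ 1 := by
      intro r hr
      rw [← abs_le, abs_mul, abs_of_pos hi, inv_mul_le_iff₀ hs]
      simpa using hr
    refine ⟨s⁻¹ • π₀, s⁻¹ • ω₀, ?_, fun i => ⟨mul_nonneg hi.le (h2 i), (bd _ ?_).2⟩,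
      fun j => bd _ ?_, ?_⟩
    · rw [Matrix.mulVec_smul, Matrix.mulVec_smul, ← smul_add, h1, smul_zero]
    · have := norm_le_pi_norm π₀ i
      rw [Real.norm_eq_abs] at this
      have := norm_nonneg ω₀
      simp only [s]; linarith
    · have := norm_le_pi_norm ω₀ j
      rw [Real.norm_eq_abs] at this
      have := norm_nonneg π₀
      simp only [s]; linarith
    · rw [dotProduct_smul, dotProduct_smul, ← smul_add]
      exact mul_pos hi h3
  refine ⟨?_, fun πs ωs hf hmax => ⟨fun i => (hf.2.1 i).1, hf.1,
    lt_of_lt_of_le g4 (hmax π₁ ω₁ g1 g2 g3)⟩⟩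
  let K : Set ((Fin m → ℝ) × (Fin p → ℝ)) :=
    (Set.Icc 0 1 ×ˢ Set.Icc (-1) 1) ∩ {q | Aᵀ.mulVec q.1 + Cᵀ.mulVec q.2 = 0}
  have hK : IsCompact K := by
    refine (isCompact_Icc.prod isCompact_Icc).inter_right (isClosed_eq ?_ continuous_const)
    exact (continuous_const.matrix_mulVec continuous_fst).add
      (continuous_const.matrix_mulVec continuous_snd)
  have mem : ∀ (π : Fin m → ℝ) (ω : Fin p → ℝ), Aᵀ.mulVec π + Cᵀ.mulVec ω = 0 →
      (∀ i, 0 ≤ π i ∧ π i ≤ 1) → (∀ j, -1 ≤ ω j ∧ ω j ≤ 1) → (π, ω) ∈ K :=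
    fun π ω e1 e2 e3 => ⟨⟨⟨fun i => (e2 i).1, fun i => (e2 i).2⟩,
      ⟨fun i => (e3 i).1, fun i => (e3 i).2⟩⟩, e1⟩
  obtain ⟨q, hq, hqm⟩ := hK.exists_isMaxOn ⟨_, mem π₁ ω₁ g1 g2 g3⟩
    (f := fun q => b ⬝ᵥ q.1 + d ⬝ᵥ q.2)
    ((continuous_const.dotProduct continuous_fst).add
      (continuous_const.dotProduct continuous_snd)).continuousOn
  refine ⟨q.1, q.2, ⟨hq.2, fun i => ⟨hq.1.1.1 i, hq.1.1.2 i⟩,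
    fun i => ⟨hq.1.2.1 i, hq.1.2.2 i⟩⟩, fun π ω e1 e2 e3 => hqm (mem π ω e1 e2 e3), ?_⟩
  exact lt_of_lt_of_le g4 (hqm (mem π₁ ω₁ g1 g2 g3))
end

section
/- Assume the set of optimal solutions of (P) — points x with Ax ≥ b and Cx = d that minimize f over {x : Ax ≥ b, Cx = d} — is nonempty and bounded. Then for every φ > 0, every ρ > 0, and every α ∈ ℝ, the set {(x, z, y) ∈ ℝ^n × ℝ^m × ℝ^p : z ≥ 0, y ≥ 0, Ax + z ≥ b, Cx + y ≥ d, −Cx + y ≥ −d, f(x) + φ·(1ᵀz + 1ᵀy) ≤ α, max{‖z‖∞, ‖y‖∞} ≤ ρ} is bounded. (Third claim of Lemma 4.0.) -/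
open Matrix Filter

lemma exists_recession {n : ℕ} (S : Set (Fin n → ℝ)) (hS : ¬ Bornology.IsBounded S) :
    ∃ (u : Fin n → ℝ) (x : ℕ → Fin n → ℝ) (t : ℕ → ℝ), u ≠ 0 ∧ (∀ k, x k ∈ S) ∧
      (∀ k, 0 < t k) ∧ Tendsto t atTop (nhds 0) ∧
      Tendsto (fun k => t k • x k) atTop (nhds u) := by
  have h1 : ∀ k : ℕ, ∃ x ∈ S, (k : ℝ) + 1 < ‖x‖ := by
    intro k
    by_contra hcon
    push Not at hcon
    exact hS (isBounded_iff_forall_norm_le.2 ⟨_, hcon⟩)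
  choose x hxS hx using h1
  have hpos : ∀ k, 0 < ‖x k‖ := fun k => lt_trans (by positivity) (hx k)
  have hmem : ∀ k, ‖x k‖⁻¹ • x k ∈ Metric.sphere (0 : Fin n → ℝ) 1 := by
    intro k
    rw [mem_sphere_zero_iff_norm, norm_smul, norm_inv, norm_norm]
    exact inv_mul_cancel₀ (hpos k).ne'
  obtain ⟨u, hu, g, hg, hlim⟩ := (isCompact_sphere (0 : Fin n → ℝ) 1).tendsto_subseq hmem
  have hinf : Tendsto (fun k => ‖x k‖) atTop atTop :=
    tendsto_atTop_mono (fun k => by linarith [hx k]) tendsto_natCast_atTop_atTop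
  refine ⟨u, x ∘ g, fun k => ‖x (g k)‖⁻¹, ?_, fun k => hxS _, fun k => inv_pos.2 (hpos _),
    (tendsto_inv_atTop_zero.comp hinf).comp hg.tendsto_atTop, hlim⟩
  rintro rfl
  simp at hu

/-- third claim of Lemma 4.0: boundedness of level sets with
bounded relaxation variables, in the presence of equality constraints. -/
theorem level_sets_bounded_with_equalities
    {n m p : ℕ} (H : Matrix (Fin n) (Fin n) ℝ) (hH : H.PosSemidef)
    (c : Fin n → ℝ) (A : Matrix (Fin m) (Fin n) ℝ) (b : Fin m → ℝ)
    (C : Matrix (Fin p) (Fin n) ℝ) (d : Fin p → ℝ)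
    (hne : {x : Fin n → ℝ | (b ≤ A.mulVec x ∧ C.mulVec x = d) ∧
      ∀ x' : Fin n → ℝ, b ≤ A.mulVec x' → C.mulVec x' = d →
        qObj H c x ≤ qObj H c x'}.Nonempty)
    (hbd : Bornology.IsBounded {x : Fin n → ℝ | (b ≤ A.mulVec x ∧ C.mulVec x = d) ∧
      ∀ x' : Fin n → ℝ, b ≤ A.mulVec x' → C.mulVec x' = d →
        qObj H c x ≤ qObj H c x'})
    (φ : ℝ) (hφ : 0 < φ) (ρ : ℝ) (hρ : 0 < ρ) (α : ℝ) :
    Bornology.IsBounded {q : (Fin n → ℝ) × (Fin m → ℝ) × (Fin p → ℝ) |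
      0 ≤ q.2.1 ∧ 0 ≤ q.2.2 ∧ b ≤ A.mulVec q.1 + q.2.1 ∧
      d ≤ C.mulVec q.1 + q.2.2 ∧ -d ≤ -C.mulVec q.1 + q.2.2 ∧
      qObj H c q.1 + φ * ((∑ i, q.2.1 i) + ∑ j, q.2.2 j) ≤ α ∧
      max ‖q.2.1‖ ‖q.2.2‖ ≤ ρ} := by
  have hx : Bornology.IsBounded {x : Fin n → ℝ | (∀ i, b i - ρ ≤ A.mulVec x i) ∧
      (∀ j, d j - ρ ≤ C.mulVec x j) ∧ (∀ j, C.mulVec x j ≤ d j + ρ) ∧ qObj H c x ≤ α} := by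
    by_contra hcon
    obtain ⟨u, x, t, hu0, hxS, htpos, ht, hlim⟩ := exists_recession _ hcon
    have hmv : ∀ {q : ℕ} (M : Matrix (Fin q) (Fin n) ℝ) (i : Fin q),
        Tendsto (fun k => t k * M.mulVec (x k) i) atTop (nhds (M.mulVec u i)) := by
      intro q M i
      have hc : Continuous fun v : Fin n → ℝ => M.mulVec v i := by
        exact (continuous_apply i).comp (continuous_const.matrix_mulVec continuous_id)
      have := (hc.tendsto u).comp hlim
      simpa [Function.comp_def, mulVec_smul] using this
    have htc : ∀ r : ℝ, Tendsto (fun k => t k * r) atTop (nhds 0) := by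
      intro r
      simpa using ht.mul_const r
    have hAu : ∀ i, 0 ≤ A.mulVec u i := fun i =>
      le_of_tendsto_of_tendsto' (htc (b i - ρ)) (hmv A i)
        (fun k => mul_le_mul_of_nonneg_left ((hxS k).1 i) (htpos k).le)
    have hCu : C.mulVec u = 0 := by
      funext j
      apply le_antisymm
      · exact le_of_tendsto_of_tendsto' (hmv C j) (htc (d j + ρ))
          (fun k => mul_le_mul_of_nonneg_left ((hxS k).2.2.1 j) (htpos k).le)
      · exact le_of_tendsto_of_tendsto' (htc (d j - ρ)) (hmv C j)
          (fun k => mul_le_mul_of_nonneg_left ((hxS k).2.1 j) (htpos k).le)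
    have hnn : ∀ v : Fin n → ℝ, 0 ≤ v ⬝ᵥ H.mulVec v := by
      intro v
      simpa using hH.dotProduct_mulVec_nonneg v
    have hcl : Tendsto (fun k => t k * (c ⬝ᵥ x k)) atTop (nhds (c ⬝ᵥ u)) := by
      have hc : Continuous fun v : Fin n → ℝ => c ⬝ᵥ v :=
        continuous_const.dotProduct continuous_id
      have := (hc.tendsto u).comp hlim
      simpa [Function.comp_def, dotProduct_smul] using this
    have hql : Tendsto (fun k => t k * (t k * (x k ⬝ᵥ H.mulVec (x k)))) atTop
        (nhds (u ⬝ᵥ H.mulVec u)) := by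
      have hc : Continuous fun v : Fin n → ℝ => v ⬝ᵥ H.mulVec v :=
        continuous_id.dotProduct (continuous_const.matrix_mulVec continuous_id)
      have := (hc.tendsto u).comp hlim
      simpa [Function.comp_def, dotProduct_smul, smul_dotProduct, mulVec_smul] using this
    have hcu : c ⬝ᵥ u ≤ 0 := by
      refine le_of_tendsto_of_tendsto' hcl (htc α) (fun k => ?_)
      have h1 := (hxS k).2.2.2
      have h2 := hnn (x k)
      unfold qObj at h1
      exact mul_le_mul_of_nonneg_left (by linarith) (htpos k).le
    have hq : u ⬝ᵥ H.mulVec u ≤ 0 := by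
      have hr : Tendsto (fun k => 2 * (t k * (t k * α) - t k * (t k * (c ⬝ᵥ x k)))) atTop
          (nhds (2 * (0 * 0 - 0 * (c ⬝ᵥ u)))) :=
        ((ht.mul (htc α)).sub (ht.mul hcl)).const_mul 2
      have hr0 : 2 * (0 * 0 - 0 * (c ⬝ᵥ u)) = 0 := by ring
      rw [hr0] at hr
      refine le_of_tendsto_of_tendsto' hql hr (fun k => ?_)
      have h1 := (hxS k).2.2.2
      unfold qObj at h1
      have h3 := mul_le_mul_of_nonneg_left h1 (mul_pos (htpos k) (htpos k)).le
      linarith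
    have hHu : H.mulVec u = 0 := by
      have h0 : u ⬝ᵥ H.mulVec u = 0 := le_antisymm hq (hnn u)
      exact (hH.dotProduct_mulVec_zero_iff u).1 (by simpa using h0)
    obtain ⟨y, ⟨hyA, hyC⟩, hyopt⟩ := hne
    have hray : ∀ s : ℝ, 0 ≤ s → y + s • u ∈ {x : Fin n → ℝ | (b ≤ A.mulVec x ∧
        C.mulVec x = d) ∧ ∀ x' : Fin n → ℝ, b ≤ A.mulVec x' → C.mulVec x' = d →
        qObj H c x ≤ qObj H c x'} := by
      intro s hs
      refine ⟨⟨?_, ?_⟩, ?_⟩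
      · intro i
        have h1 := hyA i
        have h2 := mul_nonneg hs (hAu i)
        simp only [mulVec_add, mulVec_smul, Pi.add_apply, Pi.smul_apply, smul_eq_mul]
        linarith
      · rw [mulVec_add, mulVec_smul, hCu, smul_zero, add_zero, hyC]
      · intro x' h1 h2
        refine le_trans ?_ (hyopt x' h1 h2)
        have h3 : u ⬝ᵥ H.mulVec y = 0 := by
          have hsym : H.IsSymm := by simpa using hH.1
          rw [dotProduct_mulVec, ← mulVec_transpose, hsym.eq, hHu, zero_dotProduct]
        have h4 : s * (c ⬝ᵥ u) ≤ 0 := mul_nonpos_of_nonneg_of_nonpos hs hcu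
        unfold qObj
        simp only [mulVec_add, mulVec_smul, hHu, smul_zero, add_zero, add_dotProduct,
          smul_dotProduct, h3, dotProduct_add, dotProduct_smul, smul_eq_mul]
        linarith
    obtain ⟨R, hR⟩ := isBounded_iff_forall_norm_le.1 hbd
    have hupos : 0 < ‖u‖ := norm_pos_iff.2 hu0
    have hR0 : 0 ≤ R := (norm_nonneg _).trans (hR _ (hray 0 le_rfl))
    have hs : 0 ≤ (R + ‖y‖ + 1) / ‖u‖ := by positivity
    have h1 := hR _ (hray _ hs)
    have h2 : ‖((R + ‖y‖ + 1) / ‖u‖) • u‖ = R + ‖y‖ + 1 := by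
      rw [norm_smul, Real.norm_of_nonneg hs, div_mul_cancel₀ _ hupos.ne']
    have h3 := norm_sub_le (y + ((R + ‖y‖ + 1) / ‖u‖) • u) y
    rw [add_sub_cancel_left, h2] at h3
    linarith
  refine (hx.prod ((Metric.isBounded_closedBall (x := (0 : Fin m → ℝ)) (r := ρ)).prod
    (Metric.isBounded_closedBall (x := (0 : Fin p → ℝ)) (r := ρ)))).subset ?_
  rintro ⟨x, z, y⟩ ⟨hz, hy, hA, hC1, hC2, hf, hmax⟩
  simp only at hz hy hA hC1 hC2 hf hmax
  have hzn := (le_max_left _ _).trans hmax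
  have hyn := (le_max_right _ _).trans hmax
  have hzi : ∀ i, z i ≤ ρ := fun i =>
    (le_abs_self _).trans ((norm_le_pi_norm z i).trans hzn)
  have hyi : ∀ i, y i ≤ ρ := fun i =>
    (le_abs_self _).trans ((norm_le_pi_norm y i).trans hyn)
  refine ⟨⟨fun i => ?_, fun j => ?_, fun j => ?_, ?_⟩, ?_, ?_⟩
  · have h1 := hA i
    have h2 := hzi i
    simp only [Pi.add_apply] at h1
    linarith
  · have h1 := hC1 j
    have h2 := hyi j
    simp only [Pi.add_apply] at h1
    linarith
  · have h1 := hC2 j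
    have h2 := hyi j
    simp only [Pi.add_apply, Pi.neg_apply] at h1
    linarith
  · have h1 : 0 ≤ ∑ i, z i := Finset.sum_nonneg fun i _ => hz i
    have h2 : 0 ≤ ∑ i, y i := Finset.sum_nonneg fun i _ => hy i
    have h3 := mul_nonneg hφ.le (add_nonneg h1 h2)
    change qObj H c x ≤ α
    linarith
  · simpa using hzn
  · simpa using hyn
end
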